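/- arXiv:2212.08644 — 4 statements merged into one kernel-verified Lean document; each statement's English description precedes it below -/
import Mathlib

section
/- Let (A, I) be a Henselian pair and let B be an A-algebra which is hfp over A with respect to I. If the induced ring map A/I → B/(I·B) is module-finite, then the structure map A → B is module-finite and of finite presentation. -/
namespace HfpAux

open Polynomial

theorem map_le_jac {A T : Type*} [CommRing A] [CommRing T] [Algebra A T] [Algebra.IsIntegral A T]
    {I : Ideal A} (h : I ≤ Ideal.jacobson ⊥) : I.map (algebraMap A T) ≤ Ideal.jacobson ⊥ := by
  rw [Ideal.map_le_iff_le_comap]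
  intro x hx
  rw [Ideal.mem_comap, Ideal.jacobson, Ideal.mem_sInf]
  rintro M ⟨-, hM⟩
  have h2 : (M.comap (algebraMap A T)).IsMaximal :=
    Ideal.isMaximal_comap_of_isIntegral_of_isMaximal M
  have h3 := h hx
  rw [Ideal.jacobson, Ideal.mem_sInf] at h3
  exact h3 ⟨bot_le, h2⟩

theorem charpoly_diag {A : Type*} [CommRing A] {ι : Type*} [Fintype ι] [DecidableEq ι]
    (d : ι → A) : (Matrix.diagonal d).charpoly = ∏ i, (X - C (d i)) := by
  rw [Matrix.charpoly, Matrix.charmatrix]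
  rw [← Matrix.det_diagonal]
  congr 1
  ext i j
  by_cases h : i = j
  · subst h; simp
  · simp [h]

theorem exists_poly {A F : Type*} [CommRing A] [CommRing F] [Algebra A F] [Module.Finite A F]
    (I : Ideal A) (hI : I ≤ Ideal.jacobson ⊥) (w : F)
    (hw : w * w - w ∈ I.map (algebraMap A F))
    (hx : ∀ x : F, ∃ α : A, w * x - α • w ∈ I.map (algebraMap A F)) :
    ∃ Q : A[X], Q.Monic ∧ aeval w Q = 0 ∧ Q.eval 1 ∈ I ∧ Q.derivative.eval 1 - 1 ∈ I := by
  classical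
  have hmem : ∀ y, y ∈ I.map (algebraMap A F) ↔ y ∈ (I • ⊤ : Submodule A F) := by
    intro y; rw [Ideal.smul_top_eq_map]; rfl
  obtain ⟨s, hs⟩ := (Module.Finite.fg_top : (⊤ : Submodule A F).FG)
  let v : Option s → F := fun o => o.elim w (fun i => (1 - w) * i)
  have hspan : Submodule.span A (Set.range v) = ⊤ := by
    rw [eq_top_iff]
    apply Submodule.le_of_le_smul_of_le_jacobson_bot (I := I) Module.Finite.fg_top hI
    intro x hxt; clear hxt
    have h1 : (1 - w) * x ∈ Submodule.span A (Set.range v) := by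
      have : x ∈ Submodule.span A (s : Set F) := by rw [hs]; trivial
      induction this using Submodule.span_induction with
      | mem y hy => exact Submodule.subset_span ⟨some ⟨y, hy⟩, rfl⟩
      | zero => simp
      | add a b _ _ ha hb => rw [mul_add]; exact add_mem ha hb
      | smul a b _ hb => rw [mul_smul_comm]; exact Submodule.smul_mem _ _ hb
    obtain ⟨α, hα⟩ := hx x
    have : x = ((1 - w) * x + α • w) + (w * x - α • w) := by ring
    rw [this]
    refine Submodule.add_mem_sup (add_mem h1 (Submodule.smul_mem _ _ (Submodule.subset_span ⟨none, rfl⟩))) ?_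
    rwa [← hmem]
  let d : Option s → A := fun o => o.elim 1 (fun _ => 0)
  have hd : ∀ j, w * v j - d j • v j ∈ (I • ⊤ : Submodule A F) := by
    intro j
    rw [← hmem]
    cases j with
    | none => simpa [v, d] using hw
    | some i =>
      have : w * v (some i) - d (some i) • v (some i) = (w * w - w) * (-i) := by
        simp [v, d]; ring
      rw [this]
      exact Ideal.mul_mem_right _ _ hw
  have hc : ∀ j, ∃ a : Option s → A, (∀ i, a i ∈ I) ∧ ∑ i, a i • v i = w * v j - d j • v j := by
    intro j
    have h := hd j
    rw [← hspan, Submodule.mem_ideal_smul_span_iff_exists_sum] at h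
    obtain ⟨a, ha, h⟩ := h
    refine ⟨a, ha, ?_⟩
    rw [← h, Finsupp.sum_fintype]
    simp
  choose c hcI hc using hc
  let M : Matrix (Option s) (Option s) A := Matrix.diagonal d + Matrix.of (fun i j => c j i)
  have hrep : M.Represents v (LinearMap.mulLeft A w) := by
    rw [Matrix.represents_iff']
    intro j
    simp only [M, Matrix.add_apply, add_smul, Finset.sum_add_distrib, Matrix.of_apply, hc]
    simp [Matrix.diagonal_apply]
  have h0 : aeval w M.charpoly = 0 := by
    let M' : Matrix.isRepresentation A v := ⟨M, _, hrep⟩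
    have h1 := Matrix.isRepresentation.eq_toEnd_of_represents A v hspan M' hrep
    have h2 : aeval M' M.charpoly = 0 := by
      apply Subtype.val_injective
      have := Matrix.aeval_self_charpoly M
      change (Matrix.isRepresentation A v).val _ = _
      rw [← Polynomial.aeval_algHom_apply]
      exact this
    have h3 : aeval (LinearMap.mulLeft A w) M.charpoly = 0 := by
      rw [← h1, Polynomial.aeval_algHom_apply, h2, map_zero]
    have h4 : aeval (Algebra.lmul A F w) M.charpoly = 0 := h3
    rw [Polynomial.aeval_algHom_apply] at h4
    have h5 := LinearMap.congr_fun h4 1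
    simpa using h5
  have hmap : M.charpoly.map (Ideal.Quotient.mk I) = (X - 1) * X ^ s.card := by
    rw [← Matrix.charpoly_map]
    have : (M.map (Ideal.Quotient.mk I)) = Matrix.diagonal (fun i => Ideal.Quotient.mk I (d i)) := by
      ext i j
      have := Ideal.Quotient.eq_zero_iff_mem.2 (hcI j i)
      simp only [M, Matrix.map_apply, Matrix.add_apply, map_add, Matrix.of_apply, this, add_zero]
      by_cases h : i = j
      · subst h; simp
      · simp [h]
    rw [this, charpoly_diag, Fintype.prod_option]
    simp [d]
  have hev : ∀ q : A[X], Ideal.Quotient.mk I (q.eval 1) = (q.map (Ideal.Quotient.mk I)).eval 1 := by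
    intro q; rw [Polynomial.eval_map, Polynomial.eval₂_at_one]
  refine ⟨M.charpoly, M.charpoly_monic, h0, ?_, ?_⟩
  · rw [← Ideal.Quotient.eq_zero_iff_mem, hev, hmap]; simp
  · rw [← Ideal.Quotient.eq_zero_iff_mem, map_sub, hev, ← derivative_map, hmap]; simp

theorem exists_idem_special {A F : Type*} [CommRing A] [CommRing F] [Algebra A F] [Module.Finite A F]
    (I : Ideal A) [HenselianRing A I] (w : F)
    (hw : w * w - w ∈ I.map (algebraMap A F))
    (hx : ∀ x : F, ∃ α : A, w * x - α • w ∈ I.map (algebraMap A F)) :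
    ∃ e : F, e * e = e ∧ e - w ∈ I.map (algebraMap A F) := by
  have hI : I ≤ Ideal.jacobson ⊥ := HenselianRing.jac
  obtain ⟨Q, hQ, hQ0, hQ1, hQ'⟩ := exists_poly I hI w hw hx
  obtain ⟨a, ha, ha1⟩ := HenselianRing.is_henselian Q hQ 1 hQ1 (by
    rw [← Ideal.Quotient.eq_zero_iff_mem, map_sub, sub_eq_zero] at hQ'
    rw [hQ']; simp)
  obtain ⟨Q1, rfl⟩ := Polynomial.dvd_iff_isRoot.2 ha
  have hl := isLocalHom_of_le_jacobson_bot I hI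
  have hua : IsUnit (Q1.eval a) := by
    have h1 : (Ideal.Quotient.mk I) (Q1.eval a) = 1 := by
      rw [← Ideal.Quotient.eq_zero_iff_mem, map_sub, sub_eq_zero] at hQ'
      have h2 : (Ideal.Quotient.mk I a) = 1 := by
        rw [← Ideal.Quotient.eq_zero_iff_mem, map_sub, sub_eq_zero] at ha1; simpa using ha1
      have h3 : (Ideal.Quotient.mk I) (Q1.eval a) = (Ideal.Quotient.mk I) (Q1.eval 1) := by
        rw [← Ideal.Quotient.mk_eq_mk_iff_sub_mem] at ha1
        rw [Ideal.Quotient.eq]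
        exact Ideal.mem_of_dvd _ (Polynomial.sub_dvd_eval_sub a 1 Q1) ((Ideal.Quotient.eq).1 ha1)
      rw [h3]
      simpa [h2] using hQ'
    exact isUnit_of_map_unit (Ideal.Quotient.mk I) _ (by rw [h1]; exact isUnit_one)
  obtain ⟨b, hb⟩ := hua.exists_right_inv
  have hz : (w - algebraMap A F a) * aeval w Q1 = 0 := by simpa using hQ0
  have hdv : (w - algebraMap A F a) ∣ aeval w Q1 - algebraMap A F (Q1.eval a) := by
    have := Polynomial.sub_dvd_eval_sub w (algebraMap A F a) (Q1.map (algebraMap A F))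
    rwa [Polynomial.eval_map_algebraMap, Polynomial.eval_map_algebraMap, Polynomial.aeval_algebraMap_apply,
      Polynomial.coe_aeval_eq_eval] at this
  obtain ⟨z, hz2⟩ := hdv
  have hb' : algebraMap A F (Q1.eval a) * algebraMap A F b = 1 := by rw [← map_mul, hb, map_one]
  set q := aeval w Q1
  set β := algebraMap A F b
  set γ := algebraMap A F (Q1.eval a)
  set α := algebraMap A F a
  have hα : α - 1 ∈ I.map (algebraMap A F) := by
    have := Ideal.mem_map_of_mem (algebraMap A F) ha1
    simpa [α] using this
  refine ⟨β * q, ?_, ?_⟩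
  · have : q * q = γ * q := by linear_combination q * hz2 + z * hz
    linear_combination β ^ 2 * this + β * q * hb'
  · have e1 : β * q * (w - 1) ∈ I.map (algebraMap A F) := by
      have : β * q * (w - 1) = (α - 1) * (β * q) := by linear_combination β * hz
      rw [this]; exact Ideal.mul_mem_right _ _ hα
    have e2 : (β * q - 1) * w ∈ I.map (algebraMap A F) := by
      have : (β * q - 1) * w = (w * w - w) * (β * z) - (α - 1) * (β * z * w) := by
        linear_combination w * β * hz2 + w * hb'
      rw [this]
      exact sub_mem (Ideal.mul_mem_right _ _ hw) (Ideal.mul_mem_right _ _ hα)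
    have : β * q - w = (β * q - 1) * w - β * q * (w - 1) := by ring
    rw [this]; exact sub_mem e2 e1

end HfpAux

namespace HfpAux

open Polynomial

theorem exists_section {A F : Type*} [CommRing A] [CommRing F] [Algebra A F] [Module.Finite A F]
    [Algebra.FinitePresentation A F]
    (I : Ideal A) [HenselianRing A I] (σ : F →ₐ[A] A ⧸ I) (Δ : F)
    [Algebra.FormallySmooth A (Localization.Away Δ)] (hΔ : IsUnit (σ Δ)) (w : F) (hw : σ w = 1)
    (hx : ∀ (x : F) (α : A), Ideal.Quotient.mk I α = σ x →
      ∃ n : ℕ, w ^ n * (x - algebraMap A F α) ∈ I.map (algebraMap A F)) :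
    ∃ τ : F →ₐ[A] A, ∀ x, Ideal.Quotient.mk I (τ x) = σ x := by
  classical
  have hI : I ≤ Ideal.jacobson ⊥ := HenselianRing.jac
  have hσI : ∀ y ∈ I.map (algebraMap A F), σ y = 0 := by
    have : I.map (algebraMap A F) ≤ RingHom.ker σ := by
      rw [Ideal.map_le_iff_le_comap]
      intro a ha
      rw [Ideal.mem_comap, RingHom.mem_ker, AlgHom.commutes]
      exact Ideal.Quotient.eq_zero_iff_mem.2 ha
    exact fun y hy => this hy
  have hσA : ∀ a, σ (algebraMap A F a) = Ideal.Quotient.mk I a := fun a => by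
    rw [AlgHom.commutes]; rfl
  -- common exponent
  obtain ⟨s, hs⟩ := (Module.Finite.fg_top : (⊤ : Submodule A F).FG)
  choose lift hlift using fun x : F => Ideal.Quotient.mk_surjective (σ x)
  choose n hn using fun x : F => hx x (lift x) (hlift x)
  obtain ⟨n1, hn1⟩ := hx w 1 (by rw [hw, map_one])
  let N := n1 + ∑ x ∈ s, n x
  have hN1 : w ^ N * (w - 1) ∈ I.map (algebraMap A F) := by
    have : w ^ N * (w - 1) = w ^ (∑ x ∈ s, n x) * (w ^ n1 * (w - algebraMap A F 1)) := by
      rw [map_one]; simp only [N, pow_add]; ring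
    rw [this]; exact Ideal.mul_mem_left _ _ hn1
  have hNs : ∀ x ∈ s, w ^ N * (x - algebraMap A F (lift x)) ∈ I.map (algebraMap A F) := by
    intro x hxs
    have h1 : n x ≤ N := le_trans (Finset.single_le_sum (f := n) (fun _ _ => Nat.zero_le _) hxs) (Nat.le_add_left _ _)
    obtain ⟨m, hm⟩ := Nat.exists_eq_add_of_le h1
    rw [hm, pow_add, mul_comm (w ^ n x), mul_assoc]
    exact Ideal.mul_mem_left _ _ (hn x)
  have hNx : ∀ x : F, ∃ α : A, w ^ N * x - α • w ^ N ∈ I.map (algebraMap A F) := by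
    intro x
    have : x ∈ Submodule.span A (s : Set F) := by rw [hs]; trivial
    induction this using Submodule.span_induction with
    | mem y hy =>
      refine ⟨lift y, ?_⟩
      have := hNs y hy
      rwa [mul_sub, mul_comm _ (algebraMap A F _), ← Algebra.smul_def] at this
    | zero => exact ⟨0, by simp⟩
    | add a b _ _ ha hb =>
      obtain ⟨α, ha⟩ := ha
      obtain ⟨β, hb⟩ := hb
      refine ⟨α + β, ?_⟩
      convert add_mem ha hb using 1
      rw [add_smul]; ring
    | smul a b _ hb =>
      obtain ⟨β, hb⟩ := hb
      refine ⟨a * β, ?_⟩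
      convert Ideal.mul_mem_left _ (algebraMap A F a) hb using 1
      rw [mul_sub, ← Algebra.smul_def, ← Algebra.smul_def, mul_smul, mul_smul_comm]
  have hNN : w ^ N * w ^ N - w ^ N ∈ I.map (algebraMap A F) := by
    have : w ^ N * w ^ N - w ^ N = w ^ N * (w ^ N - 1) := by ring
    rw [this]
    obtain ⟨z, hz⟩ := sub_one_dvd_pow_sub_one w N
    rw [hz, ← mul_assoc]
    exact Ideal.mul_mem_right _ _ hN1
  obtain ⟨e, hee, hew⟩ := exists_idem_special I (w ^ N) hNN hNx
  have hσe : σ e = 1 := by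
    have := hσI _ hew
    rw [map_sub, map_pow, hw, one_pow, sub_eq_zero] at this
    exact this
  let E : Ideal F := Ideal.span {1 - e}
  let D := F ⧸ E
  have hσE : ∀ a ∈ E, σ a = 0 := by
    intro a ha
    obtain ⟨z, rfl⟩ := Ideal.mem_span_singleton'.1 ha
    rw [map_mul, map_sub, hσe, map_one, sub_self, mul_zero]
  let σ' : D →ₐ[A] A ⧸ I := Ideal.Quotient.liftₐ E σ hσE
  have hσ' : ∀ x : F, σ' (Ideal.Quotient.mk E x) = σ x := fun x => rfl
  have hσ'A : ∀ a, σ' (algebraMap A D a) = Ideal.Quotient.mk I a := fun a => by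
    rw [AlgHom.commutes]; rfl
  have hsurj : Function.Surjective (algebraMap A D) := by
    have h1 : LinearMap.range (Algebra.linearMap A D) = ⊤ := by
      rw [eq_top_iff]
      apply Submodule.le_of_le_smul_of_le_jacobson_bot (I := I) Module.Finite.fg_top hI
      intro x _
      obtain ⟨x, rfl⟩ := Ideal.Quotient.mk_surjective x
      obtain ⟨α, hα⟩ := hNx x
      have h2 : e * x - e * algebraMap A F α ∈ I.map (algebraMap A F) := by
        have : e * x - e * algebraMap A F α = (e - w ^ N) * (x - algebraMap A F α) + (w ^ N * x - α • w ^ N) := by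
          rw [Algebra.smul_def]; ring
        rw [this]; exact add_mem (Ideal.mul_mem_right _ _ hew) hα
      have he1 : Ideal.Quotient.mk E e = 1 := by
        rw [← sub_eq_zero, ← map_one (Ideal.Quotient.mk E), ← map_sub, Ideal.Quotient.eq_zero_iff_mem]
        have : e - 1 = (-1) * (1 - e) := by ring
        rw [this]
        exact Ideal.mul_mem_left _ _ (Ideal.mem_span_singleton_self _)
      have h3 : Ideal.Quotient.mk E x - algebraMap A D α ∈ (I • ⊤ : Submodule A D) := by
        rw [Ideal.smul_top_eq_map]
        have h4 := Ideal.mem_map_of_mem (Ideal.Quotient.mk E) h2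
        rw [Ideal.map_map] at h4
        rw [map_sub, map_mul, map_mul, he1, one_mul, one_mul] at h4
        exact h4
      rw [show Ideal.Quotient.mk E x = algebraMap A D α + (Ideal.Quotient.mk E x - algebraMap A D α) by ring]
      exact Submodule.add_mem_sup ⟨α, rfl⟩ h3
    intro x
    have : x ∈ LinearMap.range (Algebra.linearMap A D) := by rw [h1]; trivial
    exact this
  let K : Ideal A := RingHom.ker (algebraMap A D)
  have hKfg : K.FG := by
    have : Algebra.FinitePresentation A D :=
      Algebra.FinitePresentation.quotient ⟨{1 - e}, by simp [E]⟩
    exact Algebra.FinitePresentation.ker_fG_of_surjective (Algebra.ofId A D) hsurj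
  have hKI : K ≤ I := by
    intro k hk
    rw [← Ideal.Quotient.eq_zero_iff_mem, ← hσ'A, (show algebraMap A D k = 0 from hk), map_zero]
  have hΔD : IsUnit (Ideal.Quotient.mk E Δ) := by
    obtain ⟨δ, hδ⟩ := hsurj (Ideal.Quotient.mk E Δ)
    rw [← hδ]
    apply IsUnit.map
    have := isLocalHom_of_le_jacobson_bot I hI
    apply isUnit_of_map_unit (Ideal.Quotient.mk I)
    rw [← hσ'A, hδ, hσ']
    exact hΔ
  let g : Localization.Away Δ →ₐ[A] D :=
    IsLocalization.Away.liftAlgHom (f := Ideal.Quotient.mkₐ A E) Δ hΔD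
  let p : (A ⧸ K ^ 2) →ₐ[A] D := Ideal.Quotient.liftₐ (K ^ 2) (Algebra.ofId A D) (fun a ha => by
    have : a ∈ K := Ideal.pow_le_self (by norm_num) ha
    exact this)
  have hpA : ∀ a, p (Ideal.Quotient.mk _ a) = algebraMap A D a := fun a => rfl
  have hp : Function.Surjective p := fun d => by
    obtain ⟨a, rfl⟩ := hsurj d
    exact ⟨Ideal.Quotient.mk _ a, rfl⟩
  have hker2 : ∀ x y, p x = 0 → p y = 0 → x * y = 0 := by
    intro x y hx hy
    obtain ⟨x, rfl⟩ := Ideal.Quotient.mk_surjective x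
    obtain ⟨y, rfl⟩ := Ideal.Quotient.mk_surjective y
    rw [hpA] at hx hy
    rw [← map_mul, Ideal.Quotient.eq_zero_iff_mem, pow_two]
    exact Ideal.mul_mem_mul hx hy
  have hnil : IsNilpotent (RingHom.ker (p : A ⧸ K ^ 2 →+* D)) := by
    refine ⟨2, ?_⟩
    refine (pow_two (RingHom.ker (p : A ⧸ K ^ 2 →+* D))).trans ?_
    rw [Ideal.zero_eq_bot, eq_bot_iff, Ideal.mul_le]
    intro x hx y hy
    exact hker2 x y hx hy
  let h0 := Algebra.FormallySmooth.liftOfSurjective g p hp hnil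
  have hh0 : ∀ x, p (h0 x) = g x := fun x =>
    Algebra.FormallySmooth.liftOfSurjective_apply g p hp hnil x
  let h : F →ₐ[A] A ⧸ K ^ 2 := h0.comp (IsScalarTower.toAlgHom A F (Localization.Away Δ))
  have hh : ∀ x, p (h x) = Ideal.Quotient.mk E x := by
    intro x
    change p (h0 (algebraMap F (Localization.Away Δ) x)) = _
    rw [hh0]
    exact IsLocalization.Away.lift_eq Δ (g := (Ideal.Quotient.mkₐ A E : F →+* D)) hΔD x
  have hhe : 1 - h e = 0 := by
    have h1 : p (1 - h e) = 0 := by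
      rw [map_sub, hh, map_one, ← map_one (Ideal.Quotient.mk E), ← map_sub, Ideal.Quotient.eq_zero_iff_mem]
      exact Ideal.mem_span_singleton_self _
    have h2 := hker2 _ _ h1 h1
    have h3 : h e * h e = h e := by rw [← map_mul, hee]
    linear_combination h2 - h3
  have hKK : K ≤ K • K := by
    intro k hk
    have hk' : Ideal.Quotient.mk E (algebraMap A F k) = 0 := hk
    rw [Ideal.Quotient.eq_zero_iff_mem] at hk'
    obtain ⟨z, hz⟩ := Ideal.mem_span_singleton'.1 hk'
    have h1 : h (algebraMap A F k) = 0 := by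
      rw [← hz, map_mul, map_sub, map_one, hhe, mul_zero]
    rw [AlgHom.commutes] at h1
    have h2 : k ∈ K ^ 2 := Ideal.Quotient.eq_zero_iff_mem.1 h1
    rwa [pow_two] at h2
  have hK0 : K = ⊥ := Submodule.eq_bot_of_le_smul_of_le_jacobson_bot K K hKfg hKK (hKI.trans hI)
  have hinj : Function.Injective (algebraMap A D) := (RingHom.injective_iff_ker_eq_bot _).2 hK0
  let eqv : A ≃ₐ[A] D := AlgEquiv.ofBijective (Algebra.ofId A D) ⟨hinj, hsurj⟩
  refine ⟨(eqv.symm : D →ₐ[A] A).comp (Ideal.Quotient.mkₐ A E), fun x => ?_⟩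
  rw [← hσ'A, ← hσ']
  congr 1
  exact eqv.apply_symm_apply (Ideal.Quotient.mk E x)

end HfpAux

namespace HfpAux

open Polynomial

theorem isCoprime_of_eval {L : Type*} [CommRing L] (G : L[X]) (a : L) (h : IsUnit (G.eval a)) :
    IsCoprime G (X - C a) := by
  obtain ⟨b, hb⟩ := h.exists_right_inv
  obtain ⟨z, hz⟩ := Polynomial.X_sub_C_dvd_sub_C_eval (p := G) (a := a)
  refine ⟨C b, - C b * z, ?_⟩
  have : C (G.eval a) * C b = 1 := by rw [← C_mul, hb, C_1]
  linear_combination C b * hz + this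

theorem factor_unique {L : Type*} [CommRing L] {m k : ℕ} (G : MonicDegreeEq L m)
    (H : MonicDegreeEq L k) (h : G.1 * H.1 = X ^ m * (X - 1) ^ k) (h1 : IsUnit (G.1.eval 1))
    (h0 : IsUnit (H.1.eval 0)) : G.1 = X ^ m ∧ H.1 = (X - 1) ^ k := by
  cases subsingleton_or_nontrivial L
  · exact ⟨Subsingleton.elim _ _, Subsingleton.elim _ _⟩
  have hm1 : ((X - 1 : L[X]) ^ k).Monic := (monic_X_sub_C (1 : L)).pow k
  have hd1 : ((X - 1 : L[X]) ^ k).natDegree = k := by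
    rw [← C_1, (monic_X_sub_C (1 : L)).natDegree_pow, natDegree_X_sub_C, mul_one]
  have e1 : IsCoprime G.1 ((X - 1) ^ k) := by
    have := isCoprime_of_eval G.1 1 h1
    rw [C_1] at this
    exact this.pow_right
  have e0 : IsCoprime H.1 (X ^ m) := by
    have := isCoprime_of_eval H.1 0 h0
    rw [C_0, sub_zero] at this
    exact this.pow_right
  have d1 : G.1 ∣ X ^ m := e1.dvd_of_dvd_mul_right (Dvd.intro _ h)
  have d0 : H.1 ∣ (X - 1) ^ k := e0.dvd_of_dvd_mul_left (Dvd.intro_left _ h)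
  constructor
  · exact (eq_of_monic_of_dvd_of_natDegree_le G.monic (monic_X_pow m) d1 (by simp)).symm
  · exact (eq_of_monic_of_dvd_of_natDegree_le H.monic hm1 d0 (by simp [hd1])).symm

theorem exists_factor {A : Type*} [CommRing A] (I : Ideal A) [HenselianRing A I] (m k : ℕ)
    (p : MonicDegreeEq A (m + k))
    (hp : p.1.map (Ideal.Quotient.mk I) = X ^ m * (X - 1) ^ k) :
    ∃ (G : MonicDegreeEq A m) (H : MonicDegreeEq A k), p.1 = G.1 * H.1 ∧
      G.1.map (Ideal.Quotient.mk I) = X ^ m ∧ H.1.map (Ideal.Quotient.mk I) = (X - 1) ^ k := by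
  let F := UniversalFactorizationRing m k rfl p
  let G₀ : MonicDegreeEq F m := UniversalFactorizationRing.factor₁ m k rfl p
  let H₀ : MonicDegreeEq F k := UniversalFactorizationRing.factor₂ m k rfl p
  have hGH : G₀.1 * H₀.1 = p.1.map (algebraMap A F) :=
    UniversalFactorizationRing.factor₁_mul_factor₂ m k rfl p
  cases subsingleton_or_nontrivial (A ⧸ I)
  · have hI : I ≤ Ideal.jacobson ⊥ := HenselianRing.jac
    have : I = ⊤ := Ideal.Quotient.subsingleton_iff.1 inferInstance
    have h1 : (1 : A) ∈ Ideal.jacobson (⊥ : Ideal A) := hI (by rw [this]; trivial)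
    have : Subsingleton A := by
      rw [← Ideal.eq_top_iff_one, Ideal.jacobson_eq_top_iff] at h1
      exact (subsingleton_iff_zero_eq_one.1 (by
        have : (1 : A) ∈ (⊥ : Ideal A) := by rw [h1]; trivial
        exact ((Ideal.mem_bot).1 this).symm))
    exact ⟨⟨1, Subsingleton.elim _ _, fun _ _ => Subsingleton.elim _ _⟩,
      ⟨1, Subsingleton.elim _ _, fun _ _ => Subsingleton.elim _ _⟩, Subsingleton.elim _ _,
      Subsingleton.elim _ _, Subsingleton.elim _ _⟩
  let Gσ : MonicDegreeEq (A ⧸ I) m := MonicDegreeEq.mk (X ^ m) (monic_X_pow m) (by simp)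
  let Hσ : MonicDegreeEq (A ⧸ I) k := MonicDegreeEq.mk ((X - 1) ^ k) ((monic_X_sub_C (1 : A ⧸ I)).pow k)
    (by rw [← C_1, (monic_X_sub_C (1 : A ⧸ I)).natDegree_pow, natDegree_X_sub_C, mul_one])
  let σ : F →ₐ[A] A ⧸ I := (UniversalFactorizationRing.homEquiv (A ⧸ I) m k rfl p).symm
    ⟨(Gσ, Hσ), hp.symm⟩
  have hσ : UniversalFactorizationRing.homEquiv (A ⧸ I) m k rfl p σ = ⟨(Gσ, Hσ), hp.symm⟩ :=
    Equiv.apply_symm_apply _ _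
  have hσG : G₀.1.map (σ : F →+* A ⧸ I) = X ^ m := congrArg (fun q => q.1.1.1) hσ
  have hσH : H₀.1.map (σ : F →+* A ⧸ I) = (X - 1) ^ k := congrArg (fun q => q.1.2.1) hσ
  let w : F := (-1) ^ k * (G₀.1.eval 1 * H₀.1.eval 0)
  have hev1 : ∀ {L : Type _} [CommRing L] (f : F →+* L), f (G₀.1.eval 1) = (G₀.1.map f).eval 1 := by
    intro L _ f; rw [eval_map, eval₂_at_one]
  have hev0 : ∀ {L : Type _} [CommRing L] (f : F →+* L), f (H₀.1.eval 0) = (H₀.1.map f).eval 0 := by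
    intro L _ f; rw [eval_map, eval₂_at_zero, coeff_zero_eq_eval_zero]
  have hw : σ w = 1 := by
    have h1 : σ (G₀.1.eval 1) = 1 := by
      have := hev1 (σ : F →+* A ⧸ I)
      rw [hσG] at this; simpa using this
    have h2 : σ (H₀.1.eval 0) = (-1) ^ k := by
      have := hev0 (σ : F →+* A ⧸ I)
      rw [hσH] at this; simpa using this
    simp only [w, map_mul, map_pow, h1, h2, map_neg, map_one, one_mul, ← mul_pow]
    simp
  let Δ : F := (UniversalFactorizationRing.presentation m k rfl p).jacobian
  have hΔ : IsUnit (σ Δ) := by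
    rw [show Δ = _ from UniversalFactorizationRing.jacobian_resentation m k rfl p, map_mul]
    refine IsUnit.mul (by simp [isUnit_one.neg.pow]) ?_
    have hr : σ (G₀.1.resultant H₀.1) = Gσ.1.resultant Hσ.1 := by
      have := Polynomial.resultant_map_map G₀.1 H₀.1 G₀.1.natDegree H₀.1.natDegree (σ : F →+* A ⧸ I)
      rw [hσG, hσH] at this
      have hF : Nontrivial F := (σ : F →+* A ⧸ I).domain_nontrivial
      have e1 := MonicDegreeEq.natDegree G₀
      have e2 := MonicDegreeEq.natDegree H₀
      have e3 := MonicDegreeEq.natDegree Gσ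
      have e4 := MonicDegreeEq.natDegree Hσ
      rw [e3, e4]
      rw [e1, e2] at this ⊢
      exact this.symm
    refine hr ▸ ?_
    rw [isUnit_resultant_iff_isCoprime Gσ.monic]
    change IsCoprime (X ^ m) ((X - 1) ^ k)
    refine IsCoprime.pow ⟨1, -1, by ring⟩
  have : Algebra.FormallySmooth A (Localization.Away Δ) := by
    have : Algebra.Etale A (UniversalCoprimeFactorizationRing m k rfl p) := inferInstance
    have : Algebra.FormallyEtale A (UniversalCoprimeFactorizationRing m k rfl p) := inferInstance
    change Algebra.FormallySmooth A (UniversalCoprimeFactorizationRing m k rfl p)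
    infer_instance
  have : Module.Finite A F := by dsimp only [F]; infer_instance
  have : Algebra.FinitePresentation A F := by dsimp only [F]; infer_instance
  obtain ⟨τ, hτ⟩ := exists_section I σ Δ hΔ w hw (by
    intro x α hα
    let J := I.map (algebraMap A F)
    let w' : F ⧸ J := Ideal.Quotient.mk J w
    let L := Localization.Away w'
    let π : F →ₐ[A] L := (IsScalarTower.toAlgHom A (F ⧸ J) L).comp (Ideal.Quotient.mkₐ A J)
    have hAI : ∀ a ∈ I, Algebra.ofId A L a = 0 := by
      intro a ha
      have h1 : algebraMap A (F ⧸ J) a = 0 :=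
        Ideal.Quotient.eq_zero_iff_mem.2 (Ideal.mem_map_of_mem _ ha)
      rw [Algebra.ofId_apply, IsScalarTower.algebraMap_apply A (F ⧸ J) L, h1, map_zero]
    let ι : A ⧸ I →ₐ[A] L := Ideal.Quotient.liftₐ I (Algebra.ofId A L) hAI
    have hwu : IsUnit (π w) := IsLocalization.Away.algebraMap_isUnit w'
    have hprod : (G₀.1.map (π : F →+* L)) * (H₀.1.map (π : F →+* L)) = X ^ m * (X - 1) ^ k := by
      rw [← Polynomial.map_mul, hGH, Polynomial.map_map]
      have : (π : F →+* L).comp (algebraMap A F) = (ι : A ⧸ I →+* L).comp (Ideal.Quotient.mk I) := by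
        ext a
        have h1 : π (algebraMap A F a) = algebraMap A L a := π.commutes a
        have h2 : ι (algebraMap A (A ⧸ I) a) = algebraMap A L a := ι.commutes a
        exact h1.trans h2.symm
      rw [this, ← Polynomial.map_map, hp]
      simp
    have hun : IsUnit (π (G₀.1.eval 1)) ∧ IsUnit (π (H₀.1.eval 0)) := by
      have : π w = π ((-1) ^ k) * (π (G₀.1.eval 1) * π (H₀.1.eval 0)) := by
        simp only [w, map_mul]
      rw [this] at hwu
      have h2 := isUnit_of_mul_isUnit_right hwu
      exact ⟨isUnit_of_mul_isUnit_left h2, isUnit_of_mul_isUnit_right h2⟩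
    have huniq := factor_unique (G₀.map (π : F →+* L)) (H₀.map (π : F →+* L)) hprod
      (by have := hun.1
          rwa [← AlgHom.coe_toRingHom, hev1] at this)
      (by have := hun.2
          rwa [← AlgHom.coe_toRingHom, hev0] at this)
    have hEq : π = ι.comp σ := by
      apply (UniversalFactorizationRing.homEquiv L m k rfl p).injective
      apply Subtype.ext
      have hG : G₀.1.map (ι.comp σ : F →+* L) = X ^ m := by
        rw [AlgHom.comp_toRingHom, ← Polynomial.map_map, hσG]; simp
      have hH : H₀.1.map (ι.comp σ : F →+* L) = (X - 1) ^ k := by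
        rw [AlgHom.comp_toRingHom, ← Polynomial.map_map, hσH]; simp
      apply Prod.ext
      · apply Subtype.ext
        exact huniq.1.trans hG.symm
      · apply Subtype.ext
        exact huniq.2.trans hH.symm
    have hx0 : algebraMap (F ⧸ J) L (Ideal.Quotient.mk J (x - algebraMap A F α)) = 0 := by
      have h1 : π x = algebraMap A L α := by
        rw [hEq]
        change ι (σ x) = _
        rw [← hα]
        exact ι.commutes α
      have h2 : π (x - algebraMap A F α) = 0 := by rw [map_sub, h1, AlgHom.commutes, sub_self]
      exact h2
    rw [IsLocalization.map_eq_zero_iff (Submonoid.powers w')] at hx0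
    obtain ⟨⟨_, n, rfl⟩, hn⟩ := hx0
    refine ⟨n, ?_⟩
    rw [← Ideal.Quotient.eq_zero_iff_mem, map_mul, map_pow]
    exact hn)
  have hcomp : (Ideal.Quotient.mk I).comp (τ : F →+* A) = (σ : F →+* A ⧸ I) := RingHom.ext hτ
  refine ⟨G₀.map (τ : F →+* A), H₀.map (τ : F →+* A), ?_, ?_, ?_⟩
  · change _ = (G₀.1.map (τ : F →+* A)) * (H₀.1.map (τ : F →+* A))
    rw [← Polynomial.map_mul, hGH, Polynomial.map_map, AlgHom.comp_algebraMap]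
    exact (Polynomial.map_id).symm
  · change (G₀.1.map (τ : F →+* A)).map _ = _
    rw [Polynomial.map_map, hcomp, hσG]
  · change (H₀.1.map (τ : F →+* A)).map _ = _
    rw [Polynomial.map_map, hcomp, hσH]

end HfpAux

namespace HfpAux

open Polynomial

theorem subsingleton_of_quot {A : Type*} [CommRing A] {I : Ideal A} (hI : I ≤ Ideal.jacobson ⊥)
    [Subsingleton (A ⧸ I)] : Subsingleton A := by
  have : I = ⊤ := Ideal.Quotient.subsingleton_iff.1 inferInstance
  have h1 : (1 : A) ∈ Ideal.jacobson (⊥ : Ideal A) := hI (by rw [this]; trivial)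
  rw [← Ideal.eq_top_iff_one, Ideal.jacobson_eq_top_iff] at h1
  exact (subsingleton_iff_zero_eq_one.1 (by
    have : (1 : A) ∈ (⊥ : Ideal A) := by rw [h1]; trivial
    exact ((Ideal.mem_bot).1 this).symm))

theorem isCoprime_of_map {A : Type*} [CommRing A] {I : Ideal A} (hI : I ≤ Ideal.jacobson ⊥)
    {G H : A[X]} (hG : G.Monic) (hH : H.Monic)
    (h : IsCoprime (G.map (Ideal.Quotient.mk I)) (H.map (Ideal.Quotient.mk I))) :
    IsCoprime G H := by
  cases subsingleton_or_nontrivial (A ⧸ I)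
  · have := subsingleton_of_quot hI
    exact ⟨0, 0, Subsingleton.elim _ _⟩
  rw [← isUnit_resultant_iff_isCoprime hG]
  rw [← isUnit_resultant_iff_isCoprime (hG.map _), resultant_map_map, hG.natDegree_map,
    hH.natDegree_map] at h
  have := isLocalHom_of_le_jacobson_bot I hI
  exact isUnit_of_map_unit (Ideal.Quotient.mk I) _ h

theorem exists_idem {A T : Type*} [CommRing A] [CommRing T] [Algebra A T] [Algebra.IsIntegral A T]
    (I : Ideal A) [HenselianRing A I] (b : T) (hb : b * b - b ∈ I.map (algebraMap A T)) :
    ∃ e : T, e * e = e ∧ e - b ∈ I.map (algebraMap A T) := by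
  have hI : I ≤ Ideal.jacobson ⊥ := HenselianRing.jac
  cases subsingleton_or_nontrivial T
  · exact ⟨b, Subsingleton.elim _ _, by simp⟩
  have : Nontrivial A := (algebraMap A T).domain_nontrivial
  obtain ⟨p, hpm, hp0, hpI⟩ := Polynomial.exists_monic_aeval_eq_zero_forall_mem_of_mem_map hb
  set d := p.natDegree with hd
  have hd0 : d ≠ 0 := by
    intro h0
    rw [eq_one_of_monic_natDegree_zero hpm h0] at hp0
    simp at hp0
  have hpmap : p.map (Ideal.Quotient.mk I) = X ^ d := by
    ext i
    rw [coeff_map, coeff_X_pow]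
    split_ifs with h
    · rw [h, hd, coeff_natDegree, hpm.leadingCoeff, map_one]
    · exact Ideal.Quotient.eq_zero_iff_mem.2 (hpI i h)
  have hq : (X ^ 2 - X : A[X]).Monic := by monicity!
  have hqd : (X ^ 2 - X : A[X]).natDegree = 2 := by compute_degree!
  have hPd : (p.comp (X ^ 2 - X)).natDegree = d + d := by
    rw [natDegree_comp_eq_of_mul_ne_zero, hqd]
    · omega
    · simp [hpm.leadingCoeff, hq.leadingCoeff]
  have hPm : (p.comp (X ^ 2 - X)).Monic := hpm.comp hq (by rw [hqd]; norm_num)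
  let P : MonicDegreeEq A (d + d) := MonicDegreeEq.mk _ hPm hPd
  have hPmap : P.1.map (Ideal.Quotient.mk I) = X ^ d * (X - 1) ^ d := by
    change (p.comp (X ^ 2 - X)).map _ = _
    rw [Polynomial.map_comp, hpmap, ← mul_pow]
    simp only [Polynomial.map_sub, Polynomial.map_pow, map_X, pow_comp, X_comp]
    congr 1
    ring
  obtain ⟨G, H, hGH, hG, hH⟩ := exists_factor I d d P hPmap
  obtain ⟨s, t, hst⟩ := isCoprime_of_map hI G.monic H.monic (by
    rw [hG, hH]
    exact IsCoprime.pow ⟨1, -1, by ring⟩)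
  have hPb : aeval b P.1 = 0 := by
    change aeval b (p.comp (X ^ 2 - X)) = 0
    rw [aeval_comp]
    simpa [pow_two] using hp0
  have hcong : ∀ q q' : A[X], q.map (Ideal.Quotient.mk I) = q'.map (Ideal.Quotient.mk I) →
      aeval b q - aeval b q' ∈ I.map (algebraMap A T) := by
    intro q q' h
    rw [← sub_eq_zero, ← Polynomial.map_sub] at h
    rw [← map_sub, aeval_eq_sum_range]
    refine Ideal.sum_mem _ fun i _ => ?_
    rw [Algebra.smul_def]
    refine Ideal.mul_mem_right _ _ (Ideal.mem_map_of_mem _ ?_)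
    rw [← Ideal.Quotient.eq_zero_iff_mem, ← coeff_map, h, coeff_zero]
  have h1 : aeval b G.1 - b ^ d ∈ I.map (algebraMap A T) := by
    simpa using hcong G.1 (X ^ d) (by simpa using hG)
  have h2 : aeval b H.1 - (b - 1) ^ d ∈ I.map (algebraMap A T) := by
    have := hcong H.1 ((X - 1) ^ d) (by simpa using hH)
    rwa [map_pow, map_sub, aeval_X, map_one] at this
  have hz : aeval b G.1 * aeval b H.1 = 0 := by rw [← map_mul, ← hGH, hPb]
  have hst' : aeval b s * aeval b G.1 + aeval b t * aeval b H.1 = 1 := by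
    simpa using congrArg (aeval b) hst
  set g := aeval b G.1
  set h := aeval b H.1
  set s' := aeval b s
  set t' := aeval b t
  obtain ⟨c, hc⟩ := Nat.exists_eq_succ_of_ne_zero hd0
  have hgb : (b - 1) * g ∈ I.map (algebraMap A T) := by
    have : (b - 1) * g = (b - 1) * (g - b ^ d) + (b * b - b) * b ^ c := by
      rw [hc, pow_succ]; ring
    rw [this]
    exact add_mem (Ideal.mul_mem_left _ _ h1) (Ideal.mul_mem_right _ _ hb)
  have hhb : b * h ∈ I.map (algebraMap A T) := by
    have : b * h = b * (h - (b - 1) ^ d) + (b * b - b) * (b - 1) ^ c := by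
      rw [hc, pow_succ]; ring
    rw [this]
    exact add_mem (Ideal.mul_mem_left _ _ h2) (Ideal.mul_mem_right _ _ hb)
  refine ⟨s' * g, ?_, ?_⟩
  · linear_combination s' * g * hst' - s' * t' * hz
  · have : s' * g - b = -s' * ((b - 1) * g) - t' * (b * h) := by
      linear_combination b * hst'
    rw [this]
    exact sub_mem (Ideal.mul_mem_left _ _ hgb) (Ideal.mul_mem_left _ _ hhb)

end HfpAux

namespace HfpAux

open Polynomial

theorem henselian_of_finite {A S : Type*} [CommRing A] [CommRing S] [Algebra A S] [Module.Finite A S]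
    (I : Ideal A) [HenselianRing A I] : HenselianRing S (I.map (algebraMap A S)) := by
  have hI : I ≤ Ideal.jacobson ⊥ := HenselianRing.jac
  set J := I.map (algebraMap A S) with hJdef
  have hJ : J ≤ Ideal.jacobson ⊥ := map_le_jac hI
  refine ⟨hJ, ?_⟩
  intro f hf a₀ hfa hder
  cases subsingleton_or_nontrivial S
  · exact ⟨a₀, Subsingleton.elim _ _, by simp⟩
  have hn : f.natDegree ≠ 0 := by
    intro h0
    rw [eq_one_of_monic_natDegree_zero hf h0, eval_one, ← Ideal.eq_top_iff_one] at hfa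
    rw [hfa, top_le_iff, Ideal.jacobson_eq_top_iff] at hJ
    exact bot_ne_top hJ
  have hloc := isLocalHom_of_le_jacobson_bot J hJ
  have hu : IsUnit (f.derivative.eval a₀) := isUnit_of_map_unit (Ideal.Quotient.mk J) _ hder
  set g := f /ₘ (X - C a₀) with hg
  have hfg : f = (X - C a₀) * g + C (f.eval a₀) := by
    have := modByMonic_add_div f (X - C a₀)
    rw [modByMonic_X_sub_C_eq_C_eval] at this
    rw [add_comm] at this
    exact this.symm
  have hga : f.derivative.eval a₀ = g.eval a₀ := by
    have := congrArg (fun q => q.derivative.eval a₀) hfg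
    simpa using this
  rw [hga] at hu
  obtain ⟨v, hv⟩ := hu.exists_right_inv
  have hgd : g.natDegree = f.natDegree - 1 := by
    rw [hg, natDegree_divByMonic f (monic_X_sub_C a₀), natDegree_X_sub_C]
  have hgm : g.leadingCoeff = 1 := by
    rw [hg, leadingCoeff_divByMonic_of_monic (monic_X_sub_C a₀), hf.leadingCoeff]
    rw [degree_X_sub_C, Nat.WithBot.one_le_iff_zero_lt]
    exact natDegree_pos_iff_degree_pos.1 (Nat.pos_of_ne_zero hn)
  have hfinT : Module.Finite S (AdjoinRoot f) := hf.finite_adjoinRoot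
  have hfinA : Module.Finite A (AdjoinRoot f) := Module.Finite.trans S _
  set x := AdjoinRoot.root f with hxdef
  let T := AdjoinRoot f
  let am : S →+* T := algebraMap S T
  have hev : ∀ (q : S[X]) (b : S), ∃ z : T, aeval x q - am (q.eval b) = (x - am b) * z := by
    intro q b
    have := Polynomial.sub_dvd_eval_sub x (am b) (q.map am)
    rw [Polynomial.eval_map_algebraMap, Polynomial.eval_map_algebraMap,
      Polynomial.aeval_algebraMap_apply, Polynomial.coe_aeval_eq_eval] at this
    exact this
  have hfx : aeval x f = 0 := by rw [hxdef, AdjoinRoot.aeval_eq, AdjoinRoot.mk_self]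
  set g' : T := aeval x g with hg'
  have hxg : (x - am a₀) * g' = - am (f.eval a₀) := by
    have := congrArg (aeval x) hfg
    rw [hfx, map_add, map_mul, map_sub, aeval_X, aeval_C, aeval_C] at this
    linear_combination -this
  have hmap : I.map (algebraMap A T) = J.map am := by
    rw [hJdef, Ideal.map_map, ← IsScalarTower.algebraMap_eq A S T]
  have hfaT : am (f.eval a₀) ∈ J.map am := Ideal.mem_map_of_mem _ hfa
  obtain ⟨z, hz⟩ := hev g a₀
  have hv' : am (g.eval a₀) * am v = 1 := by rw [← map_mul, hv, map_one]
  obtain ⟨e, hee, hee0⟩ := exists_idem (A := A) I (am v * g') (by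
    rw [hmap]
    have : am v * g' * (am v * g') - am v * g' = am (f.eval a₀) * (- am v * am v * z) := by
      linear_combination am v ^ 2 * g' * hz + am v * g' * hv' + am v ^ 2 * z * hxg
    rw [this]
    exact Ideal.mul_mem_right _ _ hfaT)
  rw [hmap] at hee0
  have hxe : (x - am a₀) * e ∈ J.map am := by
    have : (x - am a₀) * e = (x - am a₀) * (e - am v * g') - am (f.eval a₀) * am v := by
      linear_combination am v * hxg
    rw [this]
    exact sub_mem (Ideal.mul_mem_left _ _ hee0) (Ideal.mul_mem_right _ _ hfaT)
  have hmem : ∀ y, y ∈ J.map am ↔ y ∈ (J • ⊤ : Submodule S T) := by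
    intro y; rw [Ideal.smul_top_eq_map]; rfl
  let M : Submodule S T := (⊤ : Submodule S T).map (LinearMap.mulLeft S e)
  have hMfg : M.FG := Submodule.FG.map _ Module.Finite.fg_top
  have hMN : M ≤ Submodule.span S {e} := by
    apply Submodule.le_of_le_smul_of_le_jacobson_bot (I := J) hMfg hJ
    rintro _ ⟨y, -, rfl⟩
    obtain ⟨q, rfl⟩ := AdjoinRoot.mk_surjective y
    obtain ⟨z, hz⟩ := hev q a₀
    rw [← AdjoinRoot.aeval_eq]
    have : LinearMap.mulLeft S e (aeval x q) = (q.eval a₀) • e + LinearMap.mulLeft S e ((x - am a₀) * e * z) := by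
      rw [LinearMap.mulLeft_apply, LinearMap.mulLeft_apply, Algebra.smul_def]
      change _ = am _ * e + _
      linear_combination e * hz - (x - am a₀) * z * hee
    rw [← hxdef, this]
    refine Submodule.add_mem_sup (Submodule.smul_mem _ _ (Submodule.mem_span_singleton_self e)) ?_
    rw [← Submodule.map_smul'']
    exact Submodule.mem_map_of_mem ((hmem _).1 (Ideal.mul_mem_right _ _ hxe))
  obtain ⟨a, ha⟩ := Submodule.mem_span_singleton.1 (hMN (⟨x, trivial, rfl⟩ : e * x ∈ M))
  have ha' : am a * e = e * x := by rw [← ha, Algebra.smul_def]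
  let c : T →ₗ[S] S := (Polynomial.lcoeff S (f.natDegree - 1)).comp (AdjoinRoot.modByMonicHom hf)
  have hcg : c g' = 1 := by
    change ((AdjoinRoot.modByMonicHom hf) g').coeff (f.natDegree - 1) = 1
    rw [hg', hxdef, AdjoinRoot.aeval_eq, AdjoinRoot.modByMonicHom_mk, (modByMonic_eq_self_iff hf).2, ← hgd]
    · exact hgm
    · apply degree_lt_degree
      omega
  have hcJ : ∀ y ∈ J.map am, c y ∈ J := by
    intro y hy
    have h1 : c y ∈ (J • ⊤ : Submodule S T).map c := Submodule.mem_map_of_mem ((hmem y).1 hy)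
    rw [Submodule.map_smul''] at h1
    have h2 := Submodule.smul_mono (le_refl J) (le_top : (⊤ : Submodule S T).map c ≤ ⊤) h1
    simpa using h2
  have hams : ∀ (s : S) (y : T), c (am s * y) = s * c y := by
    intro s y
    have := c.map_smul s y
    rwa [Algebra.smul_def, smul_eq_mul] at this
  have hce : IsUnit (c e) := by
    have h1 := hcJ _ hee0
    rw [map_sub, hams, hcg, mul_one] at h1
    apply isUnit_of_map_unit (Ideal.Quotient.mk J)
    rw [← Ideal.Quotient.eq_zero_iff_mem, map_sub, sub_eq_zero] at h1
    rw [h1]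
    exact (IsUnit.of_mul_eq_one (g.eval a₀) (by rw [mul_comm]; exact hv)).map _
  refine ⟨a, ?_, ?_⟩
  · obtain ⟨z, hz⟩ := hev f a
    have h1 : am (f.eval a) * e = 0 := by
      rw [hfx] at hz
      linear_combination -e * hz + z * ha'
    have h2 := congrArg c h1
    rw [hams, map_zero] at h2
    exact (hce.mul_left_eq_zero).1 h2
  · have h1 : am (a - a₀) * e ∈ J.map am := by
      have : am (a - a₀) * e = (x - am a₀) * e := by
        rw [map_sub]; linear_combination ha'
      rw [this]; exact hxe
    have h2 := hcJ _ h1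
    rw [hams] at h2
    exact (Ideal.mul_unit_mem_iff_mem J hce).1 h2

end HfpAux

namespace HfpAux

open Polynomial

theorem zmt_ideal {A R : Type*} [CommRing A] [CommRing R] [Algebra A R] [Algebra.FiniteType A R]
    (I : Ideal A) [Module.Finite A (R ⧸ I.map (algebraMap A R))] :
    ∃ 𝔠 : Ideal (integralClosure A R), (∀ s ∈ 𝔠, ∀ x : R, ∃ m, IsIntegral A ((s : R) ^ m * x)) ∧
      𝔠.map (algebraMap (integralClosure A R) R) ⊔ I.map (algebraMap A R) = ⊤ := by
  let N : Submodule (integralClosure A R) R :=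
    LinearMap.range (Algebra.linearMap (integralClosure A R) R)
  have hN : ∀ x : R, x ∈ N ↔ IsIntegral A x := by
    intro x
    constructor
    · rintro ⟨y, rfl⟩
      exact y.2
    · intro h
      exact ⟨⟨x, h⟩, rfl⟩
  let 𝔠 : Ideal (integralClosure A R) := ⨅ x : R, (N.colon {x}).radical
  have hc : ∀ s, s ∈ 𝔠 ↔ ∀ x : R, ∃ m, IsIntegral A ((s : R) ^ m * x) := by
    intro s
    simp only [𝔠, Ideal.mem_iInf, Ideal.mem_radical_iff, Submodule.mem_colon_singleton, hN]
    rfl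
  refine ⟨𝔠, fun s hs => (hc s).1 hs, ?_⟩
  by_contra hne
  obtain ⟨q, hq, hle⟩ := Ideal.exists_le_maximal _ hne
  have hq' := hq.isPrime
  have hIq : I.map (algebraMap A R) ≤ q := le_sup_right.trans hle
  have hIu : I ≤ q.under A := Ideal.map_le_iff_le_comap.1 hIq
  have : Module.Finite A (R ⧸ (q.under A).map (algebraMap A R)) :=
    Module.Finite.of_surjective
      (Ideal.Quotient.factorₐ A (Ideal.map_mono (f := algebraMap A R) hIu)).toLinearMap
      (Ideal.Quotient.factor_surjective (Ideal.map_mono (f := algebraMap A R) hIu))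
  have : Algebra.WeaklyQuasiFiniteAt A q := by
    unfold Algebra.WeaklyQuasiFiniteAt
    infer_instance
  obtain ⟨r, hr, hri, hrx⟩ := Algebra.zariskisMainProperty_iff.1
    (Algebra.ZariskisMainProperty.of_finiteType_of_weaklyQuasiFiniteAt (R := A) q)
  apply hr
  apply hle
  apply Ideal.mem_sup_left
  exact Ideal.mem_map_of_mem (algebraMap (integralClosure A R) R) ((hc ⟨r, hri⟩).2 hrx)

theorem exists_decomp {A R : Type*} [CommRing A] [CommRing R] [Algebra A R]
    (I : Ideal A) [Module.Finite A (R ⧸ I.map (algebraMap A R))]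
    (𝔠 : Ideal (integralClosure A R))
    (h1 : ∀ s ∈ 𝔠, ∀ x : R, ∃ m, IsIntegral A ((s : R) ^ m * x))
    (h2 : 𝔠.map (algebraMap (integralClosure A R) R) ⊔ I.map (algebraMap A R) = ⊤) (x : R) :
    ∃ y : integralClosure A R, x - y ∈ I.map (algebraMap A R) := by
  let IR := I.map (algebraMap A R)
  let N : Submodule (integralClosure A R) R :=
    LinearMap.range (Algebra.linearMap (integralClosure A R) R)
  let Q : Submodule (integralClosure A R) R := IR.restrictScalars _
  let P := N ⊔ Q
  have hfin : Module.Finite (integralClosure A R) (R ⧸ P) := by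
    have h0 : Module.Finite (integralClosure A R) (R ⧸ IR) :=
      Module.Finite.of_restrictScalars_finite A _ _
    let f : (R ⧸ IR) →ₗ[integralClosure A R] (R ⧸ P) :=
      Submodule.liftQ Q P.mkQ (by rw [Submodule.ker_mkQ]; exact le_sup_right)
    refine Module.Finite.of_surjective f ?_
    intro z
    obtain ⟨z, rfl⟩ := Submodule.mkQ_surjective _ z
    exact ⟨Submodule.Quotient.mk z, rfl⟩
  have htop : (⊤ : Submodule (integralClosure A R) (R ⧸ P)) ≤ 𝔠 • ⊤ := by
    rintro z -
    obtain ⟨z, rfl⟩ := Submodule.mkQ_surjective _ z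
    have hz : ∀ w ∈ 𝔠.map (algebraMap (integralClosure A R) R),
        P.mkQ w ∈ 𝔠 • (⊤ : Submodule (integralClosure A R) (R ⧸ P)) := by
      intro w hw
      refine Submodule.span_induction (p := fun w _ => ∀ t : R, P.mkQ (t * w) ∈
        𝔠 • (⊤ : Submodule (integralClosure A R) (R ⧸ P))) ?_ ?_ ?_ ?_ hw 1 |> fun h => by
          simpa using h
      · rintro _ ⟨s, hs, rfl⟩ t
        have : t * algebraMap (integralClosure A R) R s = s • t := by
          rw [Algebra.smul_def, mul_comm]
        rw [this, map_smul]
        exact Submodule.smul_mem_smul hs trivial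
      · intro t; simp
      · intro a b _ _ ha hb t
        rw [mul_add, map_add]
        exact add_mem (ha t) (hb t)
      · intro a b _ hb t
        rw [smul_eq_mul, ← mul_assoc]
        exact hb _
    have h3 : z ∈ 𝔠.map (algebraMap (integralClosure A R) R) ⊔ I.map (algebraMap A R) := by
      rw [h2]; trivial
    obtain ⟨w, hw, v, hv, rfl⟩ := Submodule.mem_sup.1 h3
    have hv0 : P.mkQ v = 0 := by
      rw [Submodule.mkQ_apply, Submodule.Quotient.mk_eq_zero]
      exact (le_sup_right : Q ≤ P) hv
    rw [map_add, hv0, add_zero]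
    exact hz w hw
  obtain ⟨r, hr, hr0⟩ := Submodule.exists_sub_one_mem_and_smul_eq_zero_of_fg_of_le_smul 𝔠 ⊤
    hfin.1 htop
  have hc : (1 - r) ∈ 𝔠 := by simpa using 𝔠.neg_mem hr
  have hid : ∀ (m : ℕ) (z : R ⧸ P), (1 - r) ^ m • z = z := by
    intro m
    induction m with
    | zero => intro z; simp
    | succ k ih => intro z; rw [pow_succ, mul_smul, sub_smul, one_smul, hr0 z trivial, sub_zero, ih]
  obtain ⟨m, hm⟩ := h1 _ hc x
  have hxP : x ∈ P := by
    rw [← Submodule.Quotient.mk_eq_zero, ← hid m (Submodule.Quotient.mk x),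
      ← Submodule.Quotient.mk_smul, Submodule.Quotient.mk_eq_zero]
    exact (le_sup_left : N ≤ P) ⟨⟨_, hm⟩, rfl⟩
  obtain ⟨_, ⟨y, rfl⟩, v, hv, rfl⟩ := Submodule.mem_sup.1 hxP
  refine ⟨y, ?_⟩
  have : (Algebra.linearMap (integralClosure A R) R) y + v - (y : R) = v := by
    exact add_sub_cancel_left (y : R) v
  rw [this]; exact hv

theorem exists_c {A R : Type*} [CommRing A] [CommRing R] [Algebra A R] [Algebra.FiniteType A R]
    (I : Ideal A) [Module.Finite A (R ⧸ I.map (algebraMap A R))] :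
    ∃ c : integralClosure A R, (∀ x : R, ∃ m, IsIntegral A ((c : R) ^ m * x)) ∧
      (c : R) - 1 ∈ I.map (algebraMap A R) := by
  obtain ⟨𝔠, h1, h2⟩ := zmt_ideal (R := R) I
  have h3 : (1 : R) ∈ 𝔠.map (algebraMap (integralClosure A R) R) ⊔ I.map (algebraMap A R) := by
    rw [h2]; trivial
  obtain ⟨w, hw, v, hv, hwv⟩ := Submodule.mem_sup.1 h3
  suffices H : ∃ c ∈ 𝔠, (c : R) - w ∈ I.map (algebraMap A R) by
    obtain ⟨c, hc, hcw⟩ := H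
    refine ⟨c, h1 c hc, ?_⟩
    rw [← hwv, ← sub_sub]
    exact sub_mem hcw hv
  refine Submodule.span_induction (p := fun w _ => ∃ c ∈ 𝔠, (c : R) - w ∈ I.map (algebraMap A R))
    ?_ ?_ ?_ ?_ hw
  · rintro _ ⟨s, hs, rfl⟩
    exact ⟨s, hs, by simp⟩
  · exact ⟨0, 𝔠.zero_mem, by simp⟩
  · rintro a b _ _ ⟨c, hc, hca⟩ ⟨d, hd, hdb⟩
    refine ⟨c + d, 𝔠.add_mem hc hd, ?_⟩
    have := add_mem hca hdb
    convert this using 1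
    push_cast
    ring
  · rintro a b _ ⟨c, hc, hca⟩
    obtain ⟨y, hy⟩ := exists_decomp I 𝔠 h1 h2 a
    refine ⟨y * c, 𝔠.mul_mem_left _ hc, ?_⟩
    have := sub_mem (Ideal.mul_mem_left _ a hca) (Ideal.mul_mem_right (c : R) _ hy)
    convert this using 1
    push_cast
    rw [smul_eq_mul]
    ring

theorem exists_clear {A R : Type*} [CommRing A] [CommRing R] [Algebra A R]
    (I : Ideal A) (c : integralClosure A R)
    (hc : ∀ x : R, ∃ m, IsIntegral A ((c : R) ^ m * x)) (z : R) (hz : z ∈ I.map (algebraMap A R)) :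
    ∃ n : ℕ, ∃ t ∈ I.map (algebraMap A (integralClosure A R)), (t : R) = (c : R) ^ n * z := by
  refine Submodule.span_induction (p := fun z _ => ∀ w : R, ∃ n : ℕ,
    ∃ t ∈ I.map (algebraMap A (integralClosure A R)), (t : R) = (c : R) ^ n * (w * z))
    ?_ ?_ ?_ ?_ hz 1 |> fun h => by simpa using h
  · rintro _ ⟨a, ha, rfl⟩ w
    obtain ⟨m, hm⟩ := hc w
    refine ⟨m, ⟨_, hm⟩ * algebraMap A _ a, Ideal.mul_mem_left _ _ (Ideal.mem_map_of_mem _ ha), ?_⟩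
    simp only [MulMemClass.coe_mul, Subalgebra.coe_algebraMap]
    ring
  · intro w; exact ⟨0, 0, zero_mem _, by simp⟩
  · intro a b _ _ ha hb w
    obtain ⟨n, t, ht, htn⟩ := ha w
    obtain ⟨k, s, hs, hsk⟩ := hb w
    refine ⟨n + k, c ^ k * t + c ^ n * s,
      add_mem (Ideal.mul_mem_left _ _ ht) (Ideal.mul_mem_left _ _ hs), ?_⟩
    push_cast
    rw [htn, hsk]
    ring
  · intro a b _ hb w
    obtain ⟨n, t, ht, htn⟩ := hb (w * a)
    exact ⟨n, t, ht, by rw [htn, smul_eq_mul]; ring⟩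

theorem exists_idem_finite {A R : Type*} [CommRing A] [CommRing R] [Algebra A R]
    [Algebra.FiniteType A R] (I : Ideal A) [HenselianRing A I]
    [Module.Finite A (R ⧸ I.map (algebraMap A R))] :
    ∃ e : R, e * e = e ∧ e - 1 ∈ I.map (algebraMap A R) ∧
      Module.Finite A (R ⧸ Ideal.span {1 - e}) := by
  obtain ⟨c, hc, hc1⟩ := exists_c (R := R) I
  obtain ⟨n, t, ht, htn⟩ := exists_clear I c hc _ hc1
  have ht' : c ^ n * (c - 1) ∈ I.map (algebraMap A (integralClosure A R)) := by
    have : t = c ^ n * (c - 1) := by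
      apply Subtype.ext
      rw [htn]; push_cast; rfl
    rwa [← this]
  have hdvd : (c - 1) ∣ c ^ n - 1 := sub_one_dvd_pow_sub_one _ _
  obtain ⟨k, hk⟩ := id hdvd
  have hb : c ^ n * c ^ n - c ^ n ∈ I.map (algebraMap A (integralClosure A R)) := by
    have : c ^ n * c ^ n - c ^ n = c ^ n * (c - 1) * k := by
      rw [mul_assoc, ← hk]; ring
    rw [this]; exact Ideal.mul_mem_right _ _ ht'
  obtain ⟨e, he, heb⟩ := exists_idem I (c ^ n) hb
  have hj : e * (1 - c) ∈ I.map (algebraMap A (integralClosure A R)) := by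
    have : e * (1 - c) = (e - c ^ n) * (1 - c) - c ^ n * (c - 1) := by ring
    rw [this]
    exact sub_mem (Ideal.mul_mem_right _ _ heb) ht'
  have hI : I ≤ Ideal.jacobson ⊥ := HenselianRing.jac
  have hu : IsUnit (1 - e * (1 - c)) := by
    have := Ideal.mem_jacobson_bot.1 (map_le_jac hI hj) (-1)
    convert this using 1; ring
  obtain ⟨v, hv⟩ := hu.exists_right_inv
  have hed : e = c * (e * v) := by
    have h1 : e * (1 - e * (1 - c)) = e * c := by
      linear_combination (c - 1) * he
    calc e = e * ((1 - e * (1 - c)) * v) := by rw [hv, mul_one]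
      _ = (e * (1 - e * (1 - c))) * v := by ring
      _ = c * (e * v) := by rw [h1]; ring
  have hep : ∀ m : ℕ, e = e * c ^ m * (e * v) ^ m := by
    intro m
    rw [mul_assoc, ← mul_pow, ← hed]
    have : IsIdempotentElem e := he
    rw [← pow_succ', this.pow_succ_eq]
  have hint : ∀ x : R, IsIntegral A ((e : R) * x) := by
    intro x
    obtain ⟨m, hm⟩ := hc x
    have : (e : R) * x = (e * (e * v) ^ m : integralClosure A R) * ((c : R) ^ m * x) := by
      conv_lhs => rw [hep m]
      push_cast; ring
    rw [this]
    exact IsIntegral.mul (Subtype.prop _) hm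
  refine ⟨e, by exact_mod_cast congrArg Subtype.val he, ?_, ?_⟩
  · have h1 : (e : R) - (c : R) ^ n ∈ I.map (algebraMap A R) := by
      have := Ideal.mem_map_of_mem (algebraMap (integralClosure A R) R) heb
      rw [Ideal.map_map, ← IsScalarTower.algebraMap_eq] at this
      simpa [Subalgebra.algebraMap_def] using this
    have h2 : (c : R) ^ n - 1 ∈ I.map (algebraMap A R) :=
      Ideal.mem_of_dvd _ (sub_one_dvd_pow_sub_one _ _) hc1
    simpa using add_mem h1 h2
  · have : Algebra.IsIntegral A (R ⧸ Ideal.span {1 - (e : R)}) := by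
      constructor
      intro x
      obtain ⟨x, rfl⟩ := Ideal.Quotient.mk_surjective x
      have : Ideal.Quotient.mk (Ideal.span {1 - (e : R)}) x =
          Ideal.Quotient.mkₐ A (Ideal.span {1 - (e : R)}) ((e : R) * x) := by
        rw [Ideal.Quotient.mkₐ_eq_mk, Ideal.Quotient.eq, Ideal.mem_span_singleton]
        exact ⟨x, by ring⟩
      rw [this]
      exact (hint x).map _
    exact Algebra.IsIntegral.finite

end HfpAux

namespace HfpAux

theorem henselian_bot (C : Type*) [CommRing C] : HenselianRing C (⊥ : Ideal C) := by
  refine ⟨bot_le, ?_⟩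
  intro f hf a₀ h0 _
  exact ⟨a₀, by simpa [Polynomial.IsRoot] using h0, by simp⟩

end HfpAux

/-- A ring homomorphism `ρ : R →+* H` exhibits `H` as a Henselization of the pair `(R, K)`:
`(H, K·H)` is a Henselian pair, and every map from `(R, K)` to a Henselian pair factors
uniquely through `ρ`. -/
def IsHenselization {R H : Type u} [CommRing R] [CommRing H]
    (K : Ideal R) (ρ : R →+* H) : Prop :=
  HenselianRing H (K.map ρ) ∧
    ∀ (C : Type u) [CommRing C] (J : Ideal C), HenselianRing C J →
      ∀ f : R →+* C, K.map f ≤ J → ∃! g : H →+* C, g.comp ρ = f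

/-- `φ : A →+* B` is Henselian finitely presented (hfp) with respect to `I`:
`B` is a Henselization of `(R, I·R)` for some finitely presented `A`-algebra `R`. -/
def IsHfp {A B : Type u} [CommRing A] [CommRing B] (φ : A →+* B) (I : Ideal A) : Prop :=
  ∃ (R : Type u) (_ : CommRing R) (ψ : A →+* R) (ρ : R →+* B),
    ψ.FinitePresentation ∧ ρ.comp ψ = φ ∧ IsHenselization (I.map ψ) ρ

/-- `φ : A →+* B` is h-formally étale with respect to `I`. -/
def IsHFormallyEtale {A B : Type u} [CommRing A] [CommRing B] (φ : A →+* B) (I : Ideal A) :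
    Prop :=
  ∀ (E C : Type u) [CommRing E] [CommRing C] (e : A →+* E) (c : A →+* C)
    (p : E →+* C) (u : B →+* C),
    p.comp e = c → u.comp φ = c →
    (∃ N : ℕ, 1 ≤ N ∧ Ideal.map e (I ^ N) = ⊥ ∧ Ideal.map c (I ^ N) = ⊥) →
    Function.Surjective p →
    (∃ M : ℕ, 1 ≤ M ∧ RingHom.ker p ^ M = ⊥) →
    ∃! v : B →+* E, v.comp φ = e ∧ p.comp v = u

/-- `φ : A →+* B` is h-formally smooth with respect to `I`. -/
def IsHFormallySmooth {A B : Type u} [CommRing A] [CommRing B] (φ : A →+* B) (I : Ideal A) :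
    Prop :=
  ∀ (E C : Type u) [CommRing E] [CommRing C] (e : A →+* E) (c : A →+* C)
    (p : E →+* C) (u : B →+* C),
    p.comp e = c → u.comp φ = c →
    (∃ N : ℕ, 1 ≤ N ∧ Ideal.map e (I ^ N) = ⊥ ∧ Ideal.map c (I ^ N) = ⊥) →
    Function.Surjective p →
    (∃ M : ℕ, 1 ≤ M ∧ RingHom.ker p ^ M = ⊥) →
    ∃ v : B →+* E, v.comp φ = e ∧ p.comp v = u

/-- `φ : A →+* B` is h-étale with respect to `I`: `B` is a Henselization of `(R, I·R)`
for some étale `A`-algebra `R`. -/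
def IsHEtale {A B : Type u} [CommRing A] [CommRing B] (φ : A →+* B) (I : Ideal A) : Prop :=
  ∃ (R : Type u) (_ : CommRing R) (_ : Algebra A R) (ρ : R →+* B),
    Algebra.Etale A R ∧ ρ.comp (algebraMap A R) = φ ∧
      IsHenselization (I.map (algebraMap A R)) ρ

/-- `φ : A →+* B` is h-smooth with respect to `I`: `B` is a Henselization of `(R, I·R)`
for some smooth `A`-algebra `R`. -/
def IsHSmooth {A B : Type u} [CommRing A] [CommRing B] (φ : A →+* B) (I : Ideal A) : Prop :=
  ∃ (R : Type u) (_ : CommRing R) (_ : Algebra A R) (ρ : R →+* B),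
    Algebra.Smooth A R ∧ ρ.comp (algebraMap A R) = φ ∧
      IsHenselization (I.map (algebraMap A R)) ρ

/-- A ring homomorphism is flat if it makes the target into a flat module over the source. -/
def RingHomFlat {A C : Type u} [CommRing A] [CommRing C] (f : A →+* C) : Prop :=
  letI := f.toAlgebra
  Module.Flat A C

/-- A ring homomorphism is smooth if it makes the target into a smooth algebra over the
source (smooth = formally smooth + finitely presented). -/
def RingHomSmooth {A C : Type u} [CommRing A] [CommRing C] (f : A →+* C) : Prop :=
  letI := f.toAlgebra
  Algebra.Smooth A C

/-- A ring homomorphism is étale if it makes the target into an étale algebra over the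
source (étale = formally étale + finitely presented). -/
def RingHomEtale {A C : Type u} [CommRing A] [CommRing C] (f : A →+* C) : Prop :=
  letI := f.toAlgebra
  Algebra.Etale A C

/-- If `B` is hfp over the Henselian pair `(A, I)` and `A/I → B/IB` is module-finite, then
`A → B` is module-finite and of finite presentation. -/
theorem finite_and_finitePresentation_of_isHfp_of_finite_mod
    {A B : Type u} [CommRing A] [CommRing B] [Algebra A B]
    (I : Ideal A) [HenselianRing A I]
    (hhfp : IsHfp (algebraMap A B) I)
    (hfin : (Ideal.quotientMap (I.map (algebraMap A B)) (algebraMap A B)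
      Ideal.le_comap_map).Finite) :
    (algebraMap A B).Finite ∧ (algebraMap A B).FinitePresentation := by
  obtain ⟨R, _, ψ, ρ, hψ, hρψ, hB, huniv⟩ := hhfp
  let := ψ.toAlgebra
  have hψa : ψ = algebraMap A R := rfl
  rw [hψa] at hB huniv hρψ
  have hRfp : Algebra.FinitePresentation A R := hψ
  have hIB : (I.map (algebraMap A R)).map ρ = I.map (algebraMap A B) := by
    rw [Ideal.map_map, hρψ]
  rw [hIB] at hB
  -- R / IR is finite over A
  have hfinR : Module.Finite A (R ⧸ I.map (algebraMap A R)) := by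
    obtain ⟨g, hg, -⟩ := huniv (R ⧸ I.map (algebraMap A R)) ⊥ (HfpAux.henselian_bot _)
      (Ideal.Quotient.mk _) (by rw [Ideal.map_quotient_self])
    have hgker : ∀ b ∈ I.map (algebraMap A B), g b = 0 := by
      intro b hb
      have h1 : (I.map (algebraMap A B)).map g ≤ ⊥ := by
        rw [← hIB, Ideal.map_map, hg, Ideal.map_quotient_self]
      exact h1 (Ideal.mem_map_of_mem g hb)
    have h2 : (algebraMap A (R ⧸ I.map (algebraMap A R))).Finite := by
      have e1 : algebraMap A (R ⧸ I.map (algebraMap A R)) =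
          ((Ideal.Quotient.lift _ g hgker).comp (Ideal.quotientMap (I.map (algebraMap A B))
            (algebraMap A B) Ideal.le_comap_map)).comp (Ideal.Quotient.mk I) := by
        ext a
        simp only [RingHom.comp_apply, Ideal.quotientMap_mk, Ideal.Quotient.lift_mk]
        rw [← hρψ]
        have := RingHom.congr_fun hg (algebraMap A R a)
        simp only [RingHom.comp_apply] at this ⊢
        rw [this]; rfl
      rw [e1]
      refine RingHom.Finite.comp (RingHom.Finite.comp (RingHom.Finite.of_surjective _ ?_) hfin)
        (RingHom.Finite.of_surjective _ Ideal.Quotient.mk_surjective)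
      apply Ideal.Quotient.lift_surjective_of_surjective
      intro y
      obtain ⟨x, rfl⟩ := Ideal.Quotient.mk_surjective y
      exact ⟨ρ x, RingHom.congr_fun hg x⟩
    exact RingHom.finite_algebraMap.1 h2
  obtain ⟨e, he, heI, hefin⟩ := HfpAux.exists_idem_finite (R := R) I
  have hfp1 : Algebra.FinitePresentation A (R ⧸ Ideal.span {1 - e}) :=
    Algebra.FinitePresentation.quotient ⟨{1 - e}, by simp [Ideal.submodule_span_eq]⟩
  have hH := HfpAux.henselian_of_finite (S := R ⧸ Ideal.span {1 - e}) I
  obtain ⟨g, hg, -⟩ := huniv _ _ hH (Ideal.Quotient.mk (Ideal.span {1 - e})) (by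
    rw [Ideal.map_map]; exact le_of_eq rfl)
  -- ρ e = 1
  have hρe : ρ e = 1 := by
    have hm : ρ (e - 1) ∈ I.map (algebraMap A B) := hIB ▸ Ideal.mem_map_of_mem ρ heI
    have hu := Ideal.mem_jacobson_bot.1 (hB.jac hm) 1
    have h1 : ρ (e - 1) * 1 + 1 = ρ e := by simp
    rw [h1] at hu
    have h2 : ρ e * ρ e = ρ e * 1 := by rw [← map_mul, he, mul_one]
    exact hu.mul_left_cancel h2
  let ρ' : R ⧸ Ideal.span {1 - e} →+* B := Ideal.Quotient.lift _ ρ (by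
    intro a ha
    obtain ⟨t, rfl⟩ := Ideal.mem_span_singleton.1 ha
    rw [map_mul, map_sub, map_one, hρe, sub_self, zero_mul])
  have hρ' : ρ'.comp (Ideal.Quotient.mk _) = ρ := Ideal.Quotient.lift_comp_mk _ _ _
  have hgρ : g.comp ρ' = RingHom.id _ := by
    apply Ideal.Quotient.ringHom_ext
    rw [RingHom.comp_assoc, hρ', hg, RingHom.id_comp]
  have hρg : ρ'.comp g = RingHom.id _ := by
    obtain ⟨w, -, hw⟩ := huniv B _ hB ρ hIB.le
    rw [hw (ρ'.comp g) (by beta_reduce; rw [RingHom.comp_assoc, hg, hρ']), hw (RingHom.id B) (RingHom.id_comp _)]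
  let E : (R ⧸ Ideal.span {1 - e}) ≃ₐ[A] B := AlgEquiv.ofRingEquiv
    (f := RingEquiv.ofRingHom ρ' g hρg hgρ) (by
      intro a
      have : ρ' (Ideal.Quotient.mk _ (algebraMap A R a)) = algebraMap A B a := by
        rw [← hρψ]; rfl
      exact this)
  constructor
  · rw [RingHom.finite_algebraMap]
    exact Module.Finite.equiv E.toLinearEquiv
  · rw [RingHom.finitePresentation_algebraMap]
    exact Algebra.FinitePresentation.equiv E
end

section
/- Let (A, I) be a Henselian pair and let B be an A-algebra which is hfp over A with respect to I. If the induced ring map A/I → B/(I·B) is surjective, then the structure map A → B is surjective. -/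
universe u

open Polynomial in
theorem hz_core {A B : Type*} [CommRing A] [CommRing B] [Algebra A B] (I : Ideal A)
    [HenselianRing A I] (hJ : I.map (algebraMap A B) ≤ Ideal.jacobson ⊥)
    {n : Type*} [Fintype n] [DecidableEq n] (j0 : n) (w : n → B)
    (h1 : (1 : B) ∈ Submodule.span A (Set.range w)) (t : B)
    (ht : t - 1 ∈ I.map (algebraMap A B)) (a : n → A) (ha : a j0 = 1)
    (c : n → n → A) (hc : ∀ j k, c j k ∈ I)
    (h : ∀ j, t * w j = a j • w j0 + ∑ k, c j k • w k) :
    ∃ z : A, z - 1 ∈ I ∧ algebraMap A B z = t := by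
  classical
  let M : Matrix n n A := Matrix.of fun j k => a j * (Pi.single j0 1 : n → A) k + c j k
  have hMw : (M.map (algebraMap A B)).mulVec w = t • w := by
    funext j
    simp only [Matrix.mulVec, dotProduct, Matrix.map_apply, Pi.smul_apply, smul_eq_mul, h, M,
      Matrix.of_apply, map_add, add_mul, Finset.sum_add_distrib, map_mul]
    congr 1
    · rw [Finset.sum_eq_single j0]
      · simp [Algebra.smul_def]
      · intro b _ hb
        simp [Pi.single_eq_of_ne hb]
      · simp
    · simp [Algebra.smul_def]
  -- determinant trick
  have hdet : aeval t M.charpoly = 0 := by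
    have e1 : aeval t M.charpoly = (Matrix.scalar n t - M.map (algebraMap A B)).det := by
      rw [← Matrix.eval_charpoly, Matrix.charpoly_map, eval_map_algebraMap]
    set N := Matrix.scalar n t - M.map (algebraMap A B) with hN
    have e2 : N.mulVec w = 0 := by
      rw [hN, Matrix.sub_mulVec, hMw]
      ext j
      simp
    have e3 : N.det • w = 0 := by
      have := congrArg (fun v => N.adjugate.mulVec v) e2
      simpa [Matrix.mulVec_mulVec, Matrix.adjugate_mul, Matrix.smul_mulVec] using this
    have e4 : ∀ x ∈ Submodule.span A (Set.range w), N.det * x = 0 := by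
      intro x hx
      induction hx using Submodule.span_induction with
      | mem x hx => obtain ⟨j, rfl⟩ := hx; exact congrFun e3 j
      | zero => simp
      | add x y _ _ hx hy => rw [mul_add, hx, hy, add_zero]
      | smul r x _ hx => rw [mul_smul_comm, hx, smul_zero]
    rw [e1]; simpa using e4 1 h1
  let q := Ideal.Quotient.mk I
  have hmod : M.charpoly.map q = X ^ Fintype.card n - X ^ (Fintype.card n - 1) := by
    rw [← Matrix.charpoly_map]
    have : M.map q = Matrix.vecMulVec (fun j => q (a j)) (Pi.single j0 1) := by
      ext j k
      have : q (c j k) = 0 := Ideal.Quotient.eq_zero_iff_mem.mpr (hc j k)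
      by_cases hk : k = j0
      · subst hk; simp [M, Matrix.vecMulVec_apply, this]
      · simp [M, Matrix.vecMulVec_apply, this, Pi.single_eq_of_ne hk]
    rw [this, Matrix.charpoly_vecMulVec]
    simp [ha]
  have hcard : 1 ≤ Fintype.card n := Fintype.card_pos_iff.mpr ⟨j0⟩
  have hder : q (M.charpoly.derivative.eval 1) = 1 := by
    have : q (M.charpoly.derivative.eval 1) = (derivative (M.charpoly.map q)).eval 1 := by
      rw [derivative_map, eval_map, ← map_one q, eval₂_at_apply]
    rw [this, hmod]
    obtain ⟨m, hm⟩ := Nat.exists_eq_add_of_le hcard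
    rw [hm, Nat.add_sub_cancel_left, derivative_sub, derivative_X_pow, derivative_X_pow]
    simp
  have hev : M.charpoly.eval 1 ∈ I := by
    rw [← Ideal.Quotient.eq_zero_iff_mem]
    have : q (M.charpoly.eval 1) = (M.charpoly.map q).eval 1 := by
      rw [eval_map, ← map_one q, eval₂_at_apply]
    change q _ = 0
    rw [this, hmod]; simp
  obtain ⟨z, hz, hz1⟩ := HenselianRing.is_henselian (I := I) M.charpoly
    (Matrix.charpoly_monic M) 1 hev (by change IsUnit (q _); rw [hder]; exact isUnit_one)
  refine ⟨z, hz1, ?_⟩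
  obtain ⟨G, hG⟩ := dvd_iff_isRoot.mpr hz
  have hqz : q z = 1 := by
    rw [← map_one q]; exact Ideal.Quotient.eq.mpr hz1
  have hGz : q (G.eval z) = 1 := by
    have e : M.charpoly.derivative.eval z = G.eval z := by
      rw [hG]; simp
    rw [← e]
    have : q (M.charpoly.derivative.eval z) = (derivative (M.charpoly.map q)).eval (q z) := by
      rw [derivative_map, eval_map, eval₂_at_apply]
    rw [this, hqz, derivative_map, eval_map, ← map_one q, eval₂_at_apply, hder, map_one]
  let p := Ideal.Quotient.mk (I.map (algebraMap A B))
  have hpt : p t = 1 := by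
    rw [← map_one p]; exact Ideal.Quotient.eq.mpr ht
  have hpI : ∀ x : A, q x = 1 → p (algebraMap A B x) = 1 := by
    intro x hx
    rw [← map_one p]
    apply Ideal.Quotient.eq.mpr
    rw [← map_one (algebraMap A B), ← map_sub]
    apply Ideal.mem_map_of_mem
    exact Ideal.Quotient.eq.mp (hx.trans (map_one q).symm)
  have hGt : p (aeval t G) = 1 := by
    have e : p (aeval t G) = p (aeval (algebraMap A B z) G) := by
      rw [aeval_def, aeval_def, hom_eval₂, hom_eval₂, hpt, hpI z hqz]
    rw [e, aeval_algebraMap_apply]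
    apply hpI
    simpa using hGz
  have hu : IsUnit (aeval t G) := by
    have := isLocalHom_of_le_jacobson_bot _ hJ
    exact this.map_nonunit _ (by change IsUnit (p _); rw [hGt]; exact isUnit_one)
  rw [hG] at hdet
  simp only [map_mul, map_sub, aeval_X, aeval_C] at hdet
  exact (sub_eq_zero.mp ((hu.mul_left_eq_zero).mp hdet)).symm

theorem hz_F {A R : Type*} [CommRing A] [CommRing R] [Algebra A R] [Algebra.FiniteType A R]
    (I : Ideal A) (hs : ∀ r : R, ∃ a : A, r - algebraMap A R a ∈ I.map (algebraMap A R)) :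
    ∃ s : R, s - 1 ∈ I.map (algebraMap A R) ∧ IsIntegral A s ∧
      ∀ x, ∃ m, IsIntegral A (s ^ m * x) := by
  let F : Set R := {s | IsIntegral A s ∧ ∀ x, ∃ m, IsIntegral A (s ^ m * x)}
  have hmono : ∀ s ∈ F, ∀ x, ∃ m, ∀ i, m ≤ i → IsIntegral A (s ^ i * x) := by
    intro s hs x
    obtain ⟨m, hm⟩ := hs.2 x
    refine ⟨m, fun i hi => ?_⟩
    obtain ⟨k, rfl⟩ := Nat.exists_eq_add_of_le hi
    rw [pow_add, mul_comm (s ^ m), mul_assoc]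
    exact (hs.1.pow k).mul hm
  have hadd : ∀ s ∈ F, ∀ t ∈ F, s + t ∈ F := by
    intro s hs t ht
    refine ⟨hs.1.add ht.1, fun x => ?_⟩
    obtain ⟨m, hm⟩ := hmono s hs x
    obtain ⟨k, hk⟩ := hmono t ht x
    refine ⟨m + k, ?_⟩
    rw [add_pow, Finset.sum_mul]
    refine IsIntegral.sum _ fun i hi => ?_
    have hi' : i ≤ m + k := by simpa [Nat.lt_succ_iff] using hi
    have hc : IsIntegral A (((m + k).choose i : ℕ) : R) := by
      have := isIntegral_algebraMap (R := A) (A := R) (x := (((m + k).choose i : ℕ) : A))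
      simpa using this
    rcases le_total m i with h | h
    · have : s ^ i * t ^ (m + k - i) * ((m + k).choose i : R) * x
        = (t ^ (m + k - i) * ((m + k).choose i : R)) * (s ^ i * x) := by ring
      rw [this]
      exact ((ht.1.pow _).mul hc).mul (hm i h)
    · have : s ^ i * t ^ (m + k - i) * ((m + k).choose i : R) * x
        = (s ^ i * ((m + k).choose i : R)) * (t ^ (m + k - i) * x) := by ring
      rw [this]
      exact ((hs.1.pow _).mul hc).mul (hk _ (by omega))
  have hsp : ∀ f ∈ Ideal.span F, ∃ f' ∈ F, f - f' ∈ I.map (algebraMap A R) := by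
    intro f hf
    induction hf using Submodule.span_induction with
    | mem x hx => exact ⟨x, hx, by simp⟩
    | zero => exact ⟨0, ⟨isIntegral_zero, fun x => ⟨1, by simp [isIntegral_zero]⟩⟩, by simp⟩
    | add x y _ _ hx hy =>
      obtain ⟨x', hx', hx⟩ := hx
      obtain ⟨y', hy', hy⟩ := hy
      refine ⟨x' + y', hadd _ hx' _ hy', ?_⟩
      have := add_mem hx hy
      convert this using 1; ring
    | smul r x _ hx =>
      obtain ⟨x', hx', hx⟩ := hx
      obtain ⟨a, ha⟩ := hs r
      refine ⟨algebraMap A R a * x', ⟨isIntegral_algebraMap.mul hx'.1, fun y => ?_⟩, ?_⟩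
      · obtain ⟨m, hm⟩ := hx'.2 y
        refine ⟨m, ?_⟩
        rw [mul_pow, mul_assoc]
        exact (isIntegral_algebraMap.pow m).mul hm
      · have := add_mem (Ideal.mul_mem_left _ r hx) (Ideal.mul_mem_right x' _ ha)
        convert this using 1
        simp only [smul_eq_mul]; ring
  have htop : Ideal.span F ⊔ I.map (algebraMap A R) = ⊤ := by
    by_contra hne
    obtain ⟨q, hq, hle⟩ := Ideal.exists_le_maximal _ hne
    have hIq : I.map (algebraMap A R) ≤ q := le_sup_right.trans hle
    have : q.IsPrime := hq.isPrime
    have hqf : Algebra.QuasiFiniteAt A q := by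
      refine Algebra.QuasiFiniteAt.of_isOpen_singleton_fiber (R := A) (⟨q, this⟩ : PrimeSpectrum R) ?_
      convert isOpen_univ
      rw [Set.eq_univ_iff_forall]
      rintro ⟨q', hq'⟩
      refine Subtype.ext ?_
      change q' = _
      have hq' : q'.asIdeal.comap (algebraMap A R) = q.comap (algebraMap A R) :=
        congrArg PrimeSpectrum.asIdeal hq'
      have hIq' : I.map (algebraMap A R) ≤ q'.asIdeal := by
        rw [Ideal.map_le_iff_le_comap] at hIq ⊢
        rw [hq']; exact hIq
      ext x
      obtain ⟨a, ha⟩ := hs x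
      have e : x = algebraMap A R a + (x - algebraMap A R a) := by ring
      rw [e, Ideal.add_mem_iff_left _ (hIq' ha)]
      change _ ↔ _ ∈ q
      rw [Ideal.add_mem_iff_left _ (hIq ha)]
      rw [← Ideal.mem_comap, hq', Ideal.mem_comap]
    obtain ⟨r, hr, hri, hrx⟩ := Algebra.zariskisMainProperty_iff.mp
      (Algebra.ZariskisMainProperty.of_finiteType (R := A) q)
    exact hr (hle (Ideal.mem_sup_left (Ideal.subset_span ⟨hri, hrx⟩)))
  obtain ⟨f, hf, i, hi, hfi⟩ := Submodule.mem_sup.mp ((Ideal.eq_top_iff_one _).mp htop)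
  obtain ⟨s, hsF, hfs⟩ := hsp f hf
  refine ⟨s, ?_, hsF⟩
  have := neg_mem (add_mem hfs hi)
  convert this using 1
  rw [← hfi]; ring

theorem hz_S {A R : Type*} [CommRing A] [CommRing R] [Algebra A R] [Algebra.FiniteType A R]
    (I : Ideal A) (hs : ∀ r : R, ∃ a : A, r - algebraMap A R a ∈ I.map (algebraMap A R)) :
    ∃ s : R, s - 1 ∈ I.map (algebraMap A R) ∧ ∃ S : Subalgebra A R, S.toSubmodule.FG ∧ s ∈ S ∧
      ∀ x, ∃ m, s ^ m * x ∈ S := by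
  obtain ⟨s, hs1, hsi, hsx⟩ := hz_F I hs
  refine ⟨s, hs1, ?_⟩
  obtain ⟨g, hg⟩ := Algebra.FiniteType.out (R := A) (A := R)
  choose m hm using hsx
  let t : Set R := insert s ((fun x => s ^ m x * x) '' (g : Set R))
  have hst : s ∈ Algebra.adjoin A t := Algebra.subset_adjoin (by simp [t])
  refine ⟨Algebra.adjoin A t, fg_adjoin_of_finite ?_ ?_, hst, ?_⟩
  · simp only [t, Set.finite_insert]
    exact g.finite_toSet.image _
  · rintro a (rfl | ⟨x, hx, rfl⟩)
    exacts [hsi, hm _]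
  · intro x
    have hx : x ∈ Algebra.adjoin A (g : Set R) := by rw [hg]; trivial
    induction hx using Algebra.adjoin_induction with
    | mem x hx =>
      exact ⟨m x, Algebra.subset_adjoin (Set.mem_insert_of_mem _ ⟨x, hx, rfl⟩)⟩
    | algebraMap r => exact ⟨0, by simpa using Subalgebra.algebraMap_mem _ r⟩
    | add x y _ _ hx hy =>
      obtain ⟨a, ha⟩ := hx
      obtain ⟨b, hb⟩ := hy
      refine ⟨a + b, ?_⟩
      have : s ^ (a + b) * (x + y) = s ^ b * (s ^ a * x) + s ^ a * (s ^ b * y) := by ring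
      rw [this]
      exact add_mem (mul_mem (pow_mem hst _) ha) (mul_mem (pow_mem hst _) hb)
    | mul x y _ _ hx hy =>
      obtain ⟨a, ha⟩ := hx
      obtain ⟨b, hb⟩ := hy
      refine ⟨a + b, ?_⟩
      have : s ^ (a + b) * (x * y) = (s ^ a * x) * (s ^ b * y) := by ring
      rw [this]
      exact mul_mem ha hb

theorem hz_bot {A : Type*} [CommRing A] : HenselianRing A (⊥ : Ideal A) where
  jac := bot_le
  is_henselian f _ a h _ := ⟨a, by simpa using h, by simp⟩

open Polynomial in
theorem hz_one {A : Type*} [CommRing A] (I : Ideal A) [HenselianRing A I] (c : A) (hc : c ∈ I)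
    (h : A[X]) : ∃ y : A, 1 - y + c * y ^ 2 * h.eval y = 0 := by
  nontriviality A
  let d := h.natDegree
  let f : A[X] := X ^ (d + 2) + (C c * h.reverse - X ^ (d + 1))
  have hdeg : (C c * h.reverse - X ^ (d + 1)).degree < ((d + 2 : ℕ) : WithBot ℕ) := by
    refine (degree_sub_le _ _).trans_lt (max_lt ?_ ?_)
    · refine (degree_le_natDegree).trans_lt ?_
      rw [Nat.cast_lt]
      have := (natDegree_C_mul_le c h.reverse).trans (reverse_natDegree_le h)
      change _ ≤ d at this
      omega
    · rw [degree_X_pow, Nat.cast_lt]; omega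
  have hf : f.Monic := monic_X_pow_add hdeg
  have hev : f.eval 1 ∈ I := by
    have : f.eval 1 = c * h.reverse.eval 1 := by simp [f]
    rw [this]; exact I.mul_mem_right _ hc
  have hder : f.derivative.eval 1 = 1 + c * h.reverse.derivative.eval 1 := by
    simp [f]; ring
  obtain ⟨z, hz, hz1⟩ := HenselianRing.is_henselian (I := I) f hf 1 hev (by
    rw [hder, map_add, Ideal.Quotient.eq_zero_iff_mem.mpr (I.mul_mem_right _ hc), map_one, add_zero]
    exact isUnit_one)
  have hzu : IsUnit z := by
    have := isLocalHom_of_le_jacobson_bot I (HenselianRing.jac)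
    refine this.map_nonunit _ ?_
    rw [Ideal.Quotient.eq.mpr hz1, map_one]; exact isUnit_one
  obtain ⟨u, rfl⟩ := hzu
  refine ⟨(u⁻¹ : Aˣ), ?_⟩
  have hrev : h.reverse.eval (u : A) = (u : A) ^ d * h.eval ((u⁻¹ : Aˣ) : A) := by
    letI : Invertible ((u⁻¹ : Aˣ) : A) := ⟨u, by simp, by simp⟩
    have e : h.reverse.eval (u : A) * ((u⁻¹ : Aˣ) : A) ^ d = h.eval ((u⁻¹ : Aˣ) : A) :=
      eval₂_reverse_mul_pow (RingHom.id A) ((u⁻¹ : Aˣ) : A) h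
    rw [← e, mul_left_comm, ← mul_pow, Units.mul_inv, one_pow, mul_one]
  have h0 : (u : A) ^ (d + 2) + (c * ((u : A) ^ d * h.eval ((u⁻¹ : Aˣ) : A)) - (u : A) ^ (d + 1)) = 0 := by
    rw [← hrev]
    simpa [f, IsRoot] using hz
  have huu : (u : A) * ((u⁻¹ : Aˣ) : A) = 1 := u.mul_inv
  apply (u.isUnit.pow (d + 2)).mul_right_eq_zero.mp
  rw [← h0]
  generalize h.eval ((u⁻¹ : Aˣ) : A) = k
  generalize ((u⁻¹ : Aˣ) : A) = v at huu
  linear_combination (c * k * (u : A) ^ d * ((u : A) * v + 1) - (u : A) ^ (d + 1)) * huu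

open Polynomial in
theorem hz_quot {A B : Type*} [CommRing A] [CommRing B] (I : Ideal A) [HenselianRing A I]
    (f : A →+* B) (hf : Function.Surjective f) : HenselianRing B (I.map f) := by
  have hjac : I.map f ≤ Ideal.jacobson ⊥ := by
    intro x hx
    obtain ⟨i, hi, rfl⟩ := (Ideal.mem_map_iff_of_surjective f hf).mp hx
    rw [Ideal.mem_jacobson_bot]
    intro y
    obtain ⟨y, rfl⟩ := hf y
    have := Ideal.mem_jacobson_bot.mp (HenselianRing.jac (I := I) hi) y
    simpa using this.map f
  refine ⟨hjac, fun g _ a0 hg hg' => ?_⟩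
  have hu : IsUnit (g.derivative.eval a0) :=
    (isLocalHom_of_le_jacobson_bot _ hjac).map_nonunit _ hg'
  obtain ⟨v, hv⟩ := hu.exists_right_inv
  obtain ⟨i, hi, hie⟩ := (Ideal.mem_map_iff_of_surjective f hf).mp hg
  let k := (taylor a0 g).divX.divX
  have htay : ∀ t, g.eval (a0 + t) = g.eval a0 + g.derivative.eval a0 * t + t ^ 2 * k.eval t := by
    intro t
    have e : (taylor a0 g).eval t = g.eval (a0 + t) := by rw [taylor_eval, add_comm]
    rw [← e, ← divX_mul_X_add (taylor a0 g)]
    conv_lhs => rw [← divX_mul_X_add (taylor a0 g).divX]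
    simp [k, coeff_divX, taylor_coeff_zero, taylor_coeff_one]
    ring
  obtain ⟨h, hh⟩ := Polynomial.map_surjective f hf (C (v ^ 2) * k.comp (C (-(g.eval a0) * v) * X))
  obtain ⟨y, hy⟩ := hz_one I i hi h
  refine ⟨a0 + (-(g.eval a0) * v * f y), ?_, ?_⟩
  · have hy' := congrArg f hy
    have e : f (h.eval y) = v ^ 2 * k.eval (-(g.eval a0) * v * f y) := by
      rw [← eval₂_at_apply, ← eval_map, hh]; simp
    simp only [map_add, map_sub, map_mul, map_pow, map_one, map_zero, e, hie] at hy'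
    rw [IsRoot, htay]
    linear_combination (g.eval a0) * hy' - (g.eval a0) * f y * hv
  · have : a0 + (-(g.eval a0) * v * f y) - a0 = g.eval a0 * (-v * f y) := by ring
    rw [this]
    exact Ideal.mul_mem_right _ _ hg

theorem hz_range {A R B : Type*} [CommRing A] [CommRing R] [CommRing B] [Algebra A R]
    [Algebra A B] [Algebra.FiniteType A R] (I : Ideal A) [HenselianRing A I] (ρ : R →ₐ[A] B)
    (hJ : I.map (algebraMap A B) ≤ Ideal.jacobson ⊥)
    (hs : ∀ r : R, ∃ a : A, r - algebraMap A R a ∈ I.map (algebraMap A R)) (r : R) :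
    ∃ a : A, algebraMap A B a = ρ r := by
  classical
  have hmapI : ∀ x ∈ I.map (algebraMap A R), ρ x ∈ I.map (algebraMap A B) := by
    intro x hx
    have := Ideal.mem_map_of_mem (ρ : R →+* B) hx
    rw [Ideal.map_map] at this
    rwa [ρ.comp_algebraMap] at this
  obtain ⟨s, hs1, S, hS, hsS, hsx⟩ := hz_S I hs
  obtain ⟨k, w, hw⟩ := Submodule.fg_iff_exists_fin_generating_family.mp hS
  -- powers of `s` push `I R` into `I S`
  have hmul : ∀ y ∈ S, ∀ x ∈ I • S.toSubmodule, y * x ∈ I • S.toSubmodule := by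
    intro y hy x hx
    induction hx using Submodule.smul_induction_on' with
    | smul i hi n hn =>
      rw [mul_smul_comm]
      exact Submodule.smul_mem_smul hi (S.mul_mem hy hn)
    | add x _ y _ hx hy => rw [mul_add]; exact add_mem hx hy
  have hpush' : ∀ x ∈ I.map (algebraMap A R), ∃ N, s ^ N * x ∈ I • S.toSubmodule := by
    intro x hx
    induction hx using Submodule.span_induction with
    | mem x hx =>
      obtain ⟨i, hi, rfl⟩ := hx
      refine ⟨0, ?_⟩
      rw [pow_zero, one_mul, Algebra.algebraMap_eq_smul_one]
      exact Submodule.smul_mem_smul hi S.one_mem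
    | zero => exact ⟨0, by simp⟩
    | add x y _ _ hx hy =>
      obtain ⟨a, ha⟩ := hx
      obtain ⟨b, hb⟩ := hy
      refine ⟨a + b, ?_⟩
      have : s ^ (a + b) * (x + y) = s ^ b * (s ^ a * x) + s ^ a * (s ^ b * y) := by ring
      rw [this]
      exact add_mem (hmul _ (pow_mem hsS _) _ ha) (hmul _ (pow_mem hsS _) _ hb)
    | smul r x _ hx =>
      obtain ⟨a, ha⟩ := hx
      obtain ⟨b, hb⟩ := hsx r
      refine ⟨b + a, ?_⟩
      have : s ^ (b + a) * (r • x) = (s ^ b * r) * (s ^ a * x) := by rw [smul_eq_mul]; ring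
      rw [this]
      exact hmul _ hb _ ha
  have hpush : ∀ x ∈ I.map (algebraMap A R), ∀ᶠ N in Filter.atTop,
      s ^ N * x ∈ I • S.toSubmodule := by
    intro x hx
    obtain ⟨a, ha⟩ := hpush' x hx
    filter_upwards [Filter.eventually_ge_atTop a] with N hN
    obtain ⟨b, rfl⟩ := Nat.exists_eq_add_of_le hN
    rw [pow_add, mul_comm (s ^ a), mul_assoc]
    exact hmul _ (pow_mem hsS _) _ ha
  obtain ⟨N0, hN0⟩ := hpush' (s - 1) hs1
  have hpow : ∀ m, s ^ (N0 + m) - s ^ N0 ∈ I • S.toSubmodule := by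
    intro m
    induction m with
    | zero => simp
    | succ m ih =>
      have : s ^ (N0 + (m + 1)) - s ^ N0 = s ^ m * (s ^ N0 * (s - 1)) + (s ^ (N0 + m) - s ^ N0) := by
        ring
      rw [this]
      exact add_mem (hmul _ (pow_mem hsS _) _ hN0) ih
  choose α hα using fun j => hs (w j)
  let W : Option (Fin k) → R := fun o => o.elim (s ^ N0) w
  let a : Option (Fin k) → A := fun o => o.elim 1 α
  have hW : Submodule.span A (Set.range W) = S.toSubmodule := by
    apply le_antisymm
    · rw [Submodule.span_le]
      rintro _ ⟨o, rfl⟩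
      cases o with
      | none => exact pow_mem hsS N0
      | some j =>
        change w j ∈ S.toSubmodule
        rw [← hw]; exact Submodule.subset_span ⟨j, rfl⟩
    · rw [← hw]
      apply Submodule.span_mono
      rintro _ ⟨j, rfl⟩
      exact ⟨some j, rfl⟩
  have key : ∀ r ∈ I.map (algebraMap A R), ∀ᶠ N in Filter.atTop,
      ∃ z : A, z - 1 ∈ I ∧ algebraMap A B z = ρ (s ^ N * (1 + r)) := by
    intro r hr
    have hev : ∀ᶠ N in Filter.atTop, ∀ j, s ^ N * ((1 + r) * w j - algebraMap A R (α j)) ∈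
        I • S.toSubmodule := by
      rw [Filter.eventually_all]
      intro j
      apply hpush
      have := add_mem (hα j) (Ideal.mul_mem_right (w j) _ hr)
      convert this using 1; ring
    filter_upwards [hev, hpush r hr, Filter.eventually_ge_atTop N0] with N h1 h2 h3
    have hmem : ∀ o, s ^ N * (1 + r) * W o - a o • W none ∈
        I • Submodule.span A (Set.range W) := by
      rw [hW]
      intro o
      cases o with
      | none =>
        have : s ^ N * (1 + r) * W none - a none • W none =
            (s ^ (N0 + N) - s ^ N0) + s ^ N0 * (s ^ N * r) := by
          simp only [W, a, Option.elim, one_smul]; ring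
        rw [this]
        exact add_mem (hpow N) (hmul _ (pow_mem hsS _) _ h2)
      | some j =>
        have : s ^ N * (1 + r) * W (some j) - a (some j) • W none =
            s ^ N * ((1 + r) * w j - algebraMap A R (α j)) + α j • (s ^ N - s ^ N0) := by
          simp only [W, a, Option.elim, Algebra.smul_def]; ring
        rw [this]
        obtain ⟨b, rfl⟩ := Nat.exists_eq_add_of_le h3
        exact add_mem (h1 j) (Submodule.smul_mem _ _ (hpow b))
    have hc : ∀ o, ∃ c : Option (Fin k) → A, (∀ l, c l ∈ I) ∧
        s ^ N * (1 + r) * W o = a o • W none + ∑ l, c l • W l := by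
      intro o
      obtain ⟨c, hcI, hc⟩ := (Submodule.mem_ideal_smul_span_iff_exists_sum I W _).mp (hmem o)
      refine ⟨c, hcI, ?_⟩
      rw [Finsupp.sum_fintype _ _ (by simp)] at hc
      rw [hc]; ring
    choose c hcI hc using hc
    refine hz_core I hJ none (fun o => ρ (W o)) ?_ _ ?_ a rfl c hcI ?_
    · have h : (1 : R) ∈ Submodule.span A (Set.range W) := by rw [hW]; exact S.one_mem
      have := Submodule.mem_map_of_mem (f := ρ.toLinearMap) h
      rw [Submodule.map_span, ← Set.range_comp] at this
      rw [AlgHom.toLinearMap_apply, map_one] at this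
      exact this
    · have : s ^ N * (1 + r) - 1 ∈ I.map (algebraMap A R) := by
        have e : s ^ N * (1 + r) - 1 = s ^ N * r + (s ^ N - 1 ^ N) := by ring
        rw [e]
        exact add_mem (Ideal.mul_mem_left _ _ hr)
          (Ideal.mem_of_dvd _ (sub_dvd_pow_sub_pow s 1 N) hs1)
      simpa using hmapI _ this
    · intro o
      rw [← map_mul, hc o]
      simp
  obtain ⟨b, hb⟩ := hs r
  obtain ⟨N, ⟨z, hz1, hz⟩, ⟨z', -, hz'⟩⟩ :=
    ((key 0 (zero_mem _)).and (key _ hb)).exists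
  have hzu : IsUnit z := by
    have := isLocalHom_of_le_jacobson_bot I (HenselianRing.jac)
    refine this.map_nonunit _ ?_
    rw [Ideal.Quotient.eq.mpr hz1, map_one]; exact isUnit_one
  obtain ⟨u, hu⟩ := hzu.exists_right_inv
  refine ⟨u * z' - 1 + b, ?_⟩
  have hu' := congrArg (algebraMap A B) hu
  simp only [map_mul, map_one] at hu'
  simp only [map_mul, map_add, map_one, map_sub, AlgHom.commutes, add_zero, mul_one]
    at hz hz' ⊢
  rw [hz', ← hz]
  linear_combination (1 + (ρ r - algebraMap A B b)) * hu'

/-- If `B` is hfp over the Henselian pair `(A, I)` and `A/I → B/IB` is surjective, then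
`A → B` is surjective. -/
theorem surjective_of_isHfp_of_surjective_mod
    {A B : Type u} [CommRing A] [CommRing B] [Algebra A B]
    (I : Ideal A) [HenselianRing A I]
    (hhfp : IsHfp (algebraMap A B) I)
    (hsurj : Function.Surjective (Ideal.quotientMap (I.map (algebraMap A B)) (algebraMap A B)
      Ideal.le_comap_map)) :
    Function.Surjective (algebraMap A B) := by
  obtain ⟨R, _, ψ, ρ, hfp, hcomp, hB, huniv⟩ := hhfp
  letI : Algebra A R := ψ.toAlgebra
  have hψ : algebraMap A R = ψ := rfl
  rw [Ideal.map_map, hcomp] at hB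
  have hft : Algebra.FiniteType A R := RingHom.FiniteType.of_finitePresentation hfp
  let ρ' : R →ₐ[A] B := ⟨ρ, fun a => by rw [hψ]; exact RingHom.congr_fun hcomp a⟩
  have hs : ∀ r : R, ∃ a : A, r - algebraMap A R a ∈ I.map (algebraMap A R) := by
    intro r
    obtain ⟨g, hg, -⟩ := huniv (R ⧸ I.map ψ) ⊥ hz_bot (Ideal.Quotient.mk _)
      (by rw [Ideal.map_quotient_self])
    obtain ⟨a, ha⟩ := hsurj (Ideal.Quotient.mk _ (ρ r))
    obtain ⟨a, rfl⟩ := Ideal.Quotient.mk_surjective a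
    rw [Ideal.quotientMap_mk, Ideal.Quotient.eq] at ha
    have h0 : (I.map (algebraMap A B)).map g = ⊥ := by
      rw [← hcomp, ← Ideal.map_map, Ideal.map_map, hg, Ideal.map_quotient_self]
    have h1 := Ideal.mem_map_of_mem g ha
    rw [h0, Ideal.mem_bot, map_sub, sub_eq_zero, ← hcomp] at h1
    have h2 : ∀ x, g (ρ x) = Ideal.Quotient.mk _ x := fun x => RingHom.congr_fun hg x
    rw [RingHom.comp_apply, h2, h2] at h1
    exact ⟨a, Ideal.Quotient.eq.mp h1.symm⟩
  have hr : ∀ r : R, ρ r ∈ (algebraMap A B).range := fun r => hz_range I ρ' hB.jac hs r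
  have hq := hz_quot I (algebraMap A B).rangeRestrict (RingHom.rangeRestrict_surjective _)
  obtain ⟨g, hg, -⟩ := huniv _ _ hq (ρ.codRestrict _ hr) (by
    rw [Ideal.map_map]
    apply le_of_eq
    congr 1
    ext a
    exact RingHom.congr_fun hcomp a)
  obtain ⟨g', -, hu⟩ := huniv B _ hB ρ (by rw [Ideal.map_map, hcomp])
  have e1 := hu (RingHom.id B) (RingHom.id_comp ρ)
  have e2 := hu ((algebraMap A B).range.subtype.comp g) (by
    change RingHom.comp (RingHom.comp _ g) ρ = ρ
    rw [RingHom.comp_assoc, hg]; rfl)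
  intro b
  have := RingHom.congr_fun (e2.trans e1.symm) b
  obtain ⟨a, ha⟩ := (g b).2
  exact ⟨a, ha.trans this⟩
end

section
/- Let (A, I) be a Henselian pair and let B be an A-algebra which is hfp over A with respect to I. Then the map A → B is h-formally étale if and only if for every integer r ≥ 1 the induced ring map A/I^r → B/(I^r·B) is étale. -/
universe u

theorem henselianRing_of_pow_eq_bot {S : Type u} [CommRing S] (J : Ideal S) (n : ℕ)
    (h : J ^ n = ⊥) : HenselianRing S J := by
  have : IsAdicComplete J S :=
    { haus' := by
        intro x hx
        have := hx n
        rw [h] at this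
        simpa [SModEq.zero] using this
      prec' := by
        intro f hf
        refine ⟨f n, fun m => ?_⟩
        rcases le_total m n with hm | hm
        · exact hf hm
        · have := hf hm
          rw [h] at this
          simp only [Ideal.smul_eq_mul, Ideal.bot_mul, SModEq.bot] at this
          rw [this] }
  infer_instance

open TensorProduct in
theorem hfp_quot_finitePresentation {A R B A' B' : Type u} [CommRing A] [CommRing R] [CommRing B]
    [CommRing A'] [CommRing B'] [Algebra A R] [Algebra A A'] [Algebra A B'] [Algebra A' B']
    [IsScalarTower A A' B']
    (I : Ideal A) (r : ℕ) (ρ : R →+* B) (q : B →+* B')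
    (hq : Function.Surjective q)
    (hqA : q.comp (ρ.comp (algebraMap A R)) = algebraMap A B')
    (hker : RingHom.ker q = (I ^ r).map (ρ.comp (algebraMap A R)))
    (hsA : Function.Surjective (algebraMap A A'))
    (hA' : (I ^ r).map (algebraMap A A') = ⊥)
    [Algebra.FinitePresentation A R]
    (hh : IsHenselization (I.map (algebraMap A R)) ρ) :
    Algebra.FinitePresentation A' B' := by
  let T := TensorProduct A A' R
  have hT : (I.map (algebraMap A T)) ^ r = ⊥ := by
    rw [← Ideal.map_pow, IsScalarTower.algebraMap_eq A A' T, ← Ideal.map_map, hA', Ideal.map_bot]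
  let j : R →ₐ[A] T := Algebra.TensorProduct.includeRight
  obtain ⟨g, hg, -⟩ := hh.2 T (I.map (algebraMap A T)) (henselianRing_of_pow_eq_bot _ r hT)
    j.toRingHom (by
      rw [Ideal.map_map]
      apply le_of_eq
      congr 1
      exact j.comp_algebraMap)
  have hgA : g.comp (ρ.comp (algebraMap A R)) = algebraMap A T := by
    rw [← RingHom.comp_assoc, hg]; exact j.comp_algebraMap
  have hgk : ∀ x ∈ RingHom.ker q, g x = 0 := by
    intro x hx
    have : g x ∈ ((I ^ r).map (ρ.comp (algebraMap A R))).map g :=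
      Ideal.mem_map_of_mem _ (hker ▸ hx)
    rw [Ideal.map_map, hgA, Ideal.map_pow, hT] at this
    simpa using this
  let qR : R →ₐ[A] B' := { q.comp ρ with commutes' := fun a => RingHom.congr_fun hqA a }
  let σ : T →ₐ[A'] B' := Algebra.TensorProduct.lift (Algebra.ofId A' B') qR
    (fun _ _ => Commute.all _ _)
  have hσj : ∀ x, σ (j x) = q (ρ x) := by
    intro x
    have h := Algebra.TensorProduct.lift_tmul (Algebra.ofId A' B') qR
      (fun _ _ => Commute.all _ _) 1 x
    rw [map_one, one_mul] at h
    exact h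
  have hB' : (I.map (algebraMap A B')) ^ r = ⊥ := by
    rw [← Ideal.map_pow, IsScalarTower.algebraMap_eq A A' B', ← Ideal.map_map, hA', Ideal.map_bot]
  -- `σ ∘ g = q`
  have hσg : σ.toRingHom.comp g = q := by
    refine (hh.2 B' (I.map (algebraMap A B')) (henselianRing_of_pow_eq_bot _ r hB')
      (q.comp ρ) (by rw [Ideal.map_map, RingHom.comp_assoc, hqA])).unique ?_ rfl
    rw [RingHom.comp_assoc, hg]
    ext x
    exact hσj x
  have hsurj : Function.Surjective σ := fun y => by
    obtain ⟨x, rfl⟩ := hq y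
    exact ⟨g x, RingHom.congr_fun hσg x⟩
  let gb : B' →+* T := RingHom.liftOfSurjective q hq ⟨g, hgk⟩
  have hgb : ∀ x, gb (q x) = g x := fun x => RingHom.liftOfRightInverse_comp_apply _ _ _ _ _
  have hgσ : ∀ t, gb (σ t) = t := by
    intro t
    induction t using TensorProduct.induction_on with
    | zero => simp
    | add x y hx hy => rw [map_add, map_add, hx, hy]
    | tmul a x =>
      obtain ⟨a, rfl⟩ := hsA a
      have h1 : (algebraMap A A' a ⊗ₜ[A] x : TensorProduct A A' R) = algebraMap A T a * j x := by
        simp [j, T, Algebra.TensorProduct.algebraMap_apply]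
      rw [h1, map_mul, map_mul, hσj, hgb]
      have h2 : σ (algebraMap A T a) = q (ρ (algebraMap A R a)) := by
        rw [IsScalarTower.algebraMap_apply A A' T, AlgHom.commutes,
          ← IsScalarTower.algebraMap_apply A A' B', ← hqA]
        rfl
      rw [h2, hgb]
      congr 1
      · exact RingHom.congr_fun hgA a
      · exact RingHom.congr_fun hg x
  have : Algebra.FinitePresentation A' T := inferInstance
  exact Algebra.FinitePresentation.equiv (AlgEquiv.ofBijective σ
    ⟨Function.LeftInverse.injective hgσ, hsurj⟩)

theorem hetale_lift_iff {A B A' B' : Type u} [CommRing A] [CommRing B]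
    [CommRing A'] [CommRing B'] [Algebra A' B']
    (φ : A →+* B) (I : Ideal A) (r : ℕ) (hr : 1 ≤ r) (qA : A →+* A') (q : B →+* B')
    (hqA : Function.Surjective qA) (hq : Function.Surjective q)
    (hc : q.comp φ = (algebraMap A' B').comp qA)
    (hkA : RingHom.ker qA = I ^ r)
    (hker : RingHom.ker q = (I ^ r).map φ) (H : IsHFormallyEtale φ I) :
    Algebra.FormallyEtale A' B' := by
  rw [Algebra.FormallyEtale.iff_comp_bijective]
  intro E _ _ J hJ
  have hE : Ideal.map ((algebraMap A' E).comp qA) (I ^ r) = ⊥ := by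
    rw [← Ideal.map_map, ← hkA, (Ideal.map_eq_bot_iff_le_ker _).2 le_rfl, Ideal.map_bot]
  have hEJ : Ideal.map ((algebraMap A' (E ⧸ J)).comp qA) (I ^ r) = ⊥ := by
    rw [← Ideal.map_map, ← hkA, (Ideal.map_eq_bot_iff_le_ker _).2 le_rfl, Ideal.map_bot]
  have key : ∀ w : B' →ₐ[A'] E ⧸ J, _ := fun w =>
    H E (E ⧸ J) ((algebraMap A' E).comp qA) ((algebraMap A' (E ⧸ J)).comp qA)
      (Ideal.Quotient.mk J) (w.toRingHom.comp q) rfl (by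
        rw [RingHom.comp_assoc, hc, ← RingHom.comp_assoc]
        congr 1
        exact w.comp_algebraMap) ⟨r, hr, hE, hEJ⟩ Ideal.Quotient.mk_surjective
      ⟨2, by norm_num, by rw [Ideal.mk_ker, hJ]⟩
  constructor
  · intro f g hfg
    obtain ⟨v, -, hv⟩ := key ((Ideal.Quotient.mkₐ A' J).comp f)
    have h1 := hv (f.toRingHom.comp q) ⟨by
      rw [RingHom.comp_assoc, hc, ← RingHom.comp_assoc]
      congr 1
      exact f.comp_algebraMap, rfl⟩
    have h2 := hv (g.toRingHom.comp q) ⟨by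
      rw [RingHom.comp_assoc, hc, ← RingHom.comp_assoc]
      congr 1
      exact g.comp_algebraMap, by
        ext x
        exact (AlgHom.congr_fun hfg (q x)).symm⟩
    ext y
    obtain ⟨x, rfl⟩ := hq y
    exact RingHom.congr_fun (h1.trans h2.symm) x
  · intro w
    obtain ⟨v, ⟨hv1, hv2⟩, -⟩ := key w
    have hvk : ∀ x ∈ RingHom.ker q, v x = 0 := by
      intro x hx
      have : v x ∈ ((I ^ r).map φ).map v := Ideal.mem_map_of_mem _ (hker ▸ hx)
      rw [Ideal.map_map, hv1, hE] at this
      simpa using this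
    let gb : B' →+* E := RingHom.liftOfSurjective q hq ⟨v, hvk⟩
    have hgb : ∀ x, gb (q x) = v x := fun x => RingHom.liftOfRightInverse_comp_apply _ _ _ _ _
    refine ⟨{ gb with commutes' := ?_ }, ?_⟩
    · intro a
      obtain ⟨a, rfl⟩ := hqA a
      have := RingHom.congr_fun hc a
      simp only [RingHom.comp_apply] at this
      change gb _ = _
      rw [← this, hgb]
      exact RingHom.congr_fun hv1 a
    · ext y
      obtain ⟨x, rfl⟩ := hq y
      change Ideal.Quotient.mk J (gb (q x)) = w (q x)
      rw [hgb]
      exact RingHom.congr_fun hv2 x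

/-- Lifting along a formally étale algebra, in terms of ring homomorphisms. -/
theorem hetale_of_quot {A B A' B' E C : Type u} [CommRing A] [CommRing B]
    [CommRing A'] [CommRing B'] [Algebra A' B'] [CommRing E] [CommRing C]
    (φ : A →+* B) (qA : A →+* A') (q : B →+* B')
    (hqA : Function.Surjective qA) (hq : Function.Surjective q)
    (hc : q.comp φ = (algebraMap A' B').comp qA)
    (K : Ideal A) (hkA : RingHom.ker qA = K)
    (hker : RingHom.ker q = K.map φ) [Algebra.FormallyEtale A' B']
    (e : A →+* E) (p : E →+* C) (u : B →+* C) (hu : u.comp φ = p.comp e)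
    (he : K.map e = ⊥) (hp : Function.Surjective p) (hn : IsNilpotent (RingHom.ker p)) :
    ∃! v : B →+* E, v.comp φ = e ∧ p.comp v = u := by
  let e' : A' →+* E := RingHom.liftOfSurjective qA hqA
    ⟨e, by rw [hkA]; exact (Ideal.map_eq_bot_iff_le_ker _).1 he⟩
  have he' : ∀ x, e' (qA x) = e x := fun x => RingHom.liftOfRightInverse_comp_apply _ _ _ _ _
  letI : Algebra A' E := e'.toAlgebra
  letI : Algebra A' C := (p.comp e').toAlgebra
  have desc : ∀ {X : Type u} [CommRing X] (w : B →+* X), K.map (w.comp φ) = ⊥ →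
      ∀ x ∈ RingHom.ker q, w x = 0 := by
    intro X _ w hw x hx
    have : w x ∈ (K.map φ).map w := Ideal.mem_map_of_mem _ (hker ▸ hx)
    rw [Ideal.map_map, hw] at this
    simpa using this
  have hcA : ∀ a, q (φ a) = algebraMap A' B' (qA a) := fun a => RingHom.congr_fun hc a
  let u0 : B' →+* C := RingHom.liftOfSurjective q hq ⟨u, desc u (by
    rw [hu, ← Ideal.map_map, he, Ideal.map_bot])⟩
  have hu0 : ∀ x, u0 (q x) = u x := fun x => RingHom.liftOfRightInverse_comp_apply _ _ _ _ _
  let u' : B' →ₐ[A'] C := { u0 with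
    commutes' := by
      intro a
      obtain ⟨a, rfl⟩ := hqA a
      change u0 _ = p (e' (qA a))
      rw [← hcA, hu0, he']
      exact RingHom.congr_fun hu a }
  let p' : E →ₐ[A'] C := { p with commutes' := fun a => rfl }
  let v' : B' →ₐ[A'] E := Algebra.FormallySmooth.liftOfSurjective u' p' hp hn
  have hv' : ∀ x, p (v' x) = u' x := fun x =>
    Algebra.FormallySmooth.liftOfSurjective_apply u' p' hp hn x
  refine ⟨v'.toRingHom.comp q, ⟨?_, ?_⟩, ?_⟩
  · ext a
    change v' (q (φ a)) = e a
    rw [hcA, AlgHom.commutes]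
    exact he' a
  · ext x
    exact (hv' (q x)).trans (hu0 x)
  · rintro w ⟨hw1, hw2⟩
    let w0 : B' →+* E := RingHom.liftOfSurjective q hq ⟨w, desc w (by rw [hw1, he])⟩
    have hw0 : ∀ x, w0 (q x) = w x := fun x => RingHom.liftOfRightInverse_comp_apply _ _ _ _ _
    let w' : B' →ₐ[A'] E := { w0 with
      commutes' := by
        intro a
        obtain ⟨a, rfl⟩ := hqA a
        change w0 _ = e' (qA a)
        rw [← hcA, hw0, he']
        exact RingHom.congr_fun hw1 a }
    have : w' = v' := by
      refine Algebra.FormallyUnramified.ext' p hn _ _ fun y => ?_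
      rw [hv']
      obtain ⟨x, rfl⟩ := hq y
      change p (w0 (q x)) = u0 (q x)
      rw [hw0, hu0]
      exact RingHom.congr_fun hw2 x
    ext x
    change w x = v' (q x)
    rw [← this]
    exact (hw0 x).symm

/-- For `B` hfp over the Henselian pair `(A, I)`, the map `A → B` is h-formally étale iff
`A/I^r → B/I^r·B` is étale for all `r ≥ 1`. -/
theorem isHFormallyEtale_iff_etale_mod_powers
    {A B : Type u} [CommRing A] [CommRing B] [Algebra A B]
    (I : Ideal A) [HenselianRing A I]
    (hhfp : IsHfp (algebraMap A B) I) :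
    IsHFormallyEtale (algebraMap A B) I ↔
      ∀ r : ℕ, 1 ≤ r →
        RingHomEtale (Ideal.quotientMap ((I ^ r).map (algebraMap A B)) (algebraMap A B)
          Ideal.le_comap_map) := by
  constructor
  · intro H r hr
    unfold RingHomEtale
    letI := (Ideal.quotientMap ((I ^ r).map (algebraMap A B)) (algebraMap A B)
          Ideal.le_comap_map : A ⧸ I ^ r →+* _).toAlgebra
    have hfe : Algebra.FormallyEtale (A ⧸ I ^ r) (B ⧸ (I ^ r).map (algebraMap A B)) :=
      hetale_lift_iff (algebraMap A B) I r hr (Ideal.Quotient.mk _) (Ideal.Quotient.mk _)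
        Ideal.Quotient.mk_surjective Ideal.Quotient.mk_surjective rfl
        Ideal.mk_ker Ideal.mk_ker H
    have hfp : Algebra.FinitePresentation (A ⧸ I ^ r) (B ⧸ (I ^ r).map (algebraMap A B)) := by
      obtain ⟨R, _, ψ, ρ, hψ, hρ, hh⟩ := hhfp
      letI := ψ.toAlgebra
      have : Algebra.FinitePresentation A R := hψ
      have : IsScalarTower A (A ⧸ I ^ r) (B ⧸ (I ^ r).map (algebraMap A B)) :=
        IsScalarTower.of_algebraMap_eq (fun _ => rfl)
      refine hfp_quot_finitePresentation (A := A) (R := R) I r ρ (Ideal.Quotient.mk _)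
        Ideal.Quotient.mk_surjective ?_ ?_ Ideal.Quotient.mk_surjective ?_ hh
      · change (Ideal.Quotient.mk _).comp (ρ.comp ψ) = _
        rw [hρ]; rfl
      · change _ = (I ^ r).map (ρ.comp ψ)
        rw [hρ, Ideal.mk_ker]
      · exact Ideal.map_quotient_self _
    exact ⟨hfe, hfp⟩
  · intro H E C _ _ e c p u hpe huc hN hp hM
    obtain ⟨N, hN1, hNe, -⟩ := hN
    obtain ⟨M, -, hM⟩ := hM
    have hE := H N hN1
    unfold RingHomEtale at hE
    letI := (Ideal.quotientMap ((I ^ N).map (algebraMap A B)) (algebraMap A B)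
          Ideal.le_comap_map : A ⧸ I ^ N →+* _).toAlgebra
    have hfe : Algebra.FormallyEtale (A ⧸ I ^ N) (B ⧸ (I ^ N).map (algebraMap A B)) :=
      hE.formallyEtale
    exact hetale_of_quot (algebraMap A B) (Ideal.Quotient.mk _)
      (Ideal.Quotient.mk ((I ^ N).map (algebraMap A B)))
      Ideal.Quotient.mk_surjective Ideal.Quotient.mk_surjective rfl
      (I ^ N) Ideal.mk_ker Ideal.mk_ker e p u (huc.trans hpe.symm) hNe hp ⟨M, hM⟩
end

section
/- Structure of h-formally étale hfp algebras: let (A, I) be a Henselian pair and let B be an A-algebra which is hfp over A with respect to I and such that A → B is h-formally étale. Then there exist an étale A-algebra R, an A-algebra H together with an A-algebra homomorphism R → H exhibiting H as a Henselization of the pair (R, I·R), and a finitely generated ideal J of H with J ⊆ ⋂_{r ≥ 1} I^r·H, such that B is isomorphic as an A-algebra to H/J. -/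
universe u

namespace HensAux

open Polynomial

lemma isUnit_of_quot {C : Type*} [CommRing C] {J : Ideal C} (hJ : J ≤ Ideal.jacobson ⊥) {x : C}
    (h : IsUnit (Ideal.Quotient.mk J x)) : IsUnit x :=
  have := isLocalHom_of_le_jacobson_bot J hJ
  IsUnit.of_map (Ideal.Quotient.mk J) x h

lemma isUnit_add {C : Type*} [CommRing C] {J : Ideal C} (hJ : J ≤ Ideal.jacobson ⊥) {x y : C}
    (h : IsUnit x) (hy : y ∈ J) : IsUnit (x + y) := by
  apply isUnit_of_quot hJ
  rw [map_add, Ideal.Quotient.eq_zero_iff_mem.2 hy, add_zero]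
  exact h.map _

lemma diff_eq {C : Type*} [CommRing C] {J : Ideal C} (hJ : J ≤ Ideal.jacobson ⊥)
    (p : C[X]) {a₀ a : C} (h2 : IsUnit (p.derivative.eval a₀)) (h3 : a - a₀ ∈ J) :
    ∃ w : C, IsUnit w ∧ p.eval a = p.eval a₀ + w * (a - a₀) := by
  obtain ⟨k, hk⟩ := p.binomExpansion a₀ (a - a₀)
  refine ⟨p.derivative.eval a₀ + k * (a - a₀), isUnit_add hJ h2 (J.mul_mem_left _ h3), ?_⟩
  rw [add_sub_cancel] at hk
  rw [hk]; ring

lemma diff_mem {C : Type*} [CommRing C] {J J' : Ideal C} (hJ : J ≤ Ideal.jacobson ⊥)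
    (p : C[X]) {a₀ a : C} (h1 : p.eval a₀ ∈ J') (h2 : IsUnit (p.derivative.eval a₀))
    (h3 : a - a₀ ∈ J) (h4 : p.IsRoot a) : a - a₀ ∈ J' := by
  obtain ⟨w, hw, h⟩ := diff_eq hJ p h2 h3
  rw [h4.eq_zero] at h
  rw [← Ideal.unit_mul_mem_iff_mem J' hw]
  have : w * (a - a₀) = - p.eval a₀ := by linear_combination -h
  rw [this]; exact J'.neg_mem h1

lemma root_unique {C : Type*} [CommRing C] {J : Ideal C} (hJ : J ≤ Ideal.jacobson ⊥)
    (p : C[X]) {a₀ a b : C} (h2 : IsUnit (p.derivative.eval a₀))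
    (ha : a - a₀ ∈ J) (ha' : p.IsRoot a) (hb : b - a₀ ∈ J) (hb' : p.IsRoot b) : a = b := by
  have h2b : IsUnit (p.derivative.eval b) := by
    obtain ⟨k, hk⟩ := Polynomial.sub_dvd_eval_sub b a₀ p.derivative
    have : p.derivative.eval b = p.derivative.eval a₀ + (b - a₀) * k := by
      linear_combination hk
    rw [this]
    exact isUnit_add hJ h2 (J.mul_mem_right _ hb)
  have := diff_mem (J' := ⊥) hJ p (a₀ := b) (a := a) (by simpa using hb') h2b
    (by simpa using J.sub_mem ha hb) ha'
  simpa [sub_eq_zero] using this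

lemma hens_mono {C : Type*} [CommRing C] {J J' : Ideal C} (h : HenselianRing C J) (hle : J' ≤ J) :
    HenselianRing C J' where
  jac := hle.trans h.jac
  is_henselian f hf a₀ h1 h2 := by
    have hu := isUnit_of_quot (hle.trans h.jac) h2
    obtain ⟨a, ha, ha'⟩ := h.is_henselian f hf a₀ (hle h1) (hu.map _)
    exact ⟨a, ha, diff_mem h.jac f h1 hu ha' ha⟩

lemma hens_nilp {C : Type*} [CommRing C] {J : Ideal C} {N : ℕ} (h : J ^ N = ⊥) :
    HenselianRing C J := by
  have hn : ∀ x ∈ J, IsNilpotent x := fun x hx =>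
    ⟨N, by simpa [h] using Ideal.pow_mem_pow hx N⟩
  have hjac : J ≤ Ideal.jacobson ⊥ := fun x hx => by
    rw [Ideal.mem_jacobson_bot]
    intro y
    exact ((Commute.all x y).isNilpotent_mul_right (hn x hx)).isUnit_add_one
  refine ⟨hjac, fun f hf a₀ h1 h2 => ?_⟩
  have hu := isUnit_of_quot hjac h2
  obtain ⟨r, ⟨hr, hr'⟩, -⟩ := Polynomial.existsUnique_nilpotent_sub_and_aeval_eq_zero
    (P := f) (x := a₀) (by simpa using hn _ h1) (by simpa using hu)
  have hr'' : f.IsRoot r := by simpa using hr'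
  refine ⟨r, hr'', diff_mem (J := nilradical C) ?_ f h1 hu ?_ hr''⟩
  · intro x hx
    rw [Ideal.mem_jacobson_bot]
    intro y
    exact ((Commute.all x y).isNilpotent_mul_right (mem_nilradical.1 hx)).isUnit_add_one
  · rw [mem_nilradical, ← neg_sub]
    exact hr.neg

lemma hens_pi {ι : Type*} {C : ι → Type*} [∀ i, CommRing (C i)] (J : ∀ i, Ideal (C i))
    (h : ∀ i, HenselianRing (C i) (J i)) : HenselianRing (∀ i, C i) (Ideal.pi J) := by
  have hjac : Ideal.pi J ≤ Ideal.jacobson ⊥ := fun x hx => by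
    rw [Ideal.mem_jacobson_bot]
    intro y
    rw [Pi.isUnit_iff]
    intro i
    exact Ideal.mem_jacobson_bot.1 ((h i).jac (hx i)) (y i)
  refine ⟨hjac, fun f hf a₀ h1 h2 => ?_⟩
  have hu := isUnit_of_quot hjac h2
  have key : ∀ i, ∃ a : C i, (f.map (Pi.evalRingHom C i)).IsRoot a ∧ a - a₀ i ∈ J i := by
    intro i
    refine (h i).is_henselian _ (hf.map _) (a₀ i) ?_ ?_
    · have : eval (a₀ i) (f.map (Pi.evalRingHom C i)) = (f.eval a₀) i := by
        rw [eval_map]; exact eval₂_at_apply (Pi.evalRingHom C i) a₀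
      rw [this]; exact h1 i
    · have : eval (a₀ i) (derivative (f.map (Pi.evalRingHom C i))) = (f.derivative.eval a₀) i := by
        rw [derivative_map, eval_map]; exact eval₂_at_apply (Pi.evalRingHom C i) a₀
      rw [this]
      exact (Pi.isUnit_iff.1 hu i).map _
  choose a ha ha' using key
  refine ⟨a, ?_, fun i => ha' i⟩
  rw [IsRoot.def]
  funext i
  have : eval (a i) (f.map (Pi.evalRingHom C i)) = (f.eval a) i := by
    rw [eval_map]; exact eval₂_at_apply (Pi.evalRingHom C i) a
  rw [← this]; exact ha i

/-- Quotients of Henselian pairs are Henselian (via Gabber's trick). -/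
lemma hens_quot {A B : Type*} [CommRing A] [CommRing B] {I : Ideal A} (h : HenselianRing A I)
    (π : A →+* B) (hπ : Function.Surjective π) : HenselianRing B (I.map π) := by
  have hmem : ∀ x ∈ I.map π, ∃ i ∈ I, π i = x := fun x hx =>
    (Ideal.mem_map_iff_of_surjective π hπ).1 hx
  have hjac : I.map π ≤ Ideal.jacobson ⊥ := fun x hx => by
    rw [Ideal.mem_jacobson_bot]
    intro y
    obtain ⟨i, hi, rfl⟩ := hmem x hx
    obtain ⟨y, rfl⟩ := hπ y
    have := (Ideal.mem_jacobson_bot.1 (h.jac hi) y).map π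
    simpa using this
  refine ⟨hjac, fun p hp a₀ h1 h2 => ?_⟩
  have hu := isUnit_of_quot hjac h2
  obtain ⟨u, hu⟩ := hu.exists_right_inv
  set c : ℕ → B := fun k => (taylor a₀ p).coeff k with hc
  have hc0 : c 0 = p.eval a₀ := taylor_coeff_zero ..
  have hc1 : c 1 = p.derivative.eval a₀ := taylor_coeff_one ..
  rw [← hc1] at hu
  rw [← hc0] at h1
  set M := p.natDegree
  have hd : ∀ k : ℕ, ∃ D ∈ I, π D = u * c (k + 2) * (c 0 * u) ^ (k + 1) := fun k =>
    hmem _ (by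
      rw [pow_succ]
      exact Ideal.mul_mem_left _ _ (Ideal.mul_mem_left _ _ (Ideal.mul_mem_right _ _ h1)))
  choose D hD hD' using hd
  set r : A[X] := ∑ k ∈ Finset.range (M + 1), C (D k) * X ^ (M - k) with hr
  have hrdeg : r.degree ≤ (M : ℕ) := by
    refine (degree_sum_le _ _).trans (Finset.sup_le fun k _ => ?_)
    refine (degree_C_mul_X_pow_le _ _).trans ?_
    exact_mod_cast Nat.sub_le _ _
  set G : A[X] := X ^ (M + 2) + (X ^ (M + 1) + r) with hG
  have hGm : G.Monic := by
    apply monic_X_pow_add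
    refine lt_of_le_of_lt (degree_add_le _ _) (max_lt ?_ ?_)
    · refine lt_of_le_of_lt (degree_X_pow_le _) ?_
      exact_mod_cast Nat.lt_succ_self _
    · refine lt_of_le_of_lt hrdeg ?_
      exact_mod_cast (by omega : M < M + 2)
  have hre : ∀ x, r.eval x ∈ I := fun x => by
    rw [hr, eval_finsetSum]
    refine I.sum_mem fun k _ => ?_
    rw [eval_mul, eval_C]
    exact I.mul_mem_right _ (hD k)
  have hrd : ∀ x, r.derivative.eval x ∈ I := fun x => by
    rw [hr, derivative_sum, eval_finsetSum]
    refine I.sum_mem fun k _ => ?_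
    rw [derivative_C_mul, eval_mul, eval_C]
    exact I.mul_mem_right _ (hD k)
  obtain ⟨w, hw, hw1⟩ := h.is_henselian G hGm (-1) (by
      have : G.eval (-1) = r.eval (-1) := by
        simp only [hG, eval_add, eval_pow, eval_X]; ring
      rw [this]; exact hre _) (by
      have : G.derivative.eval (-1) = -(-1) ^ M + r.derivative.eval (-1) := by
        simp only [hG, derivative_add, derivative_X_pow, eval_add, eval_mul, eval_pow, eval_X,
          eval_C]
        push_cast
        ring
      rw [this, map_add, Ideal.Quotient.eq_zero_iff_mem.2 (hrd _), add_zero]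
      apply IsUnit.map
      exact ((isUnit_one.neg).pow M).neg)
  have hwu : IsUnit w := by
    have := isUnit_add h.jac (x := -1) (isUnit_one.neg) hw1
    simpa using this
  obtain ⟨z, hz⟩ := (hwu.map π).exists_right_inv
  have hy : c 0 * u * z ∈ I.map π := Ideal.mul_mem_right _ _ (Ideal.mul_mem_right _ _ h1)
  refine ⟨a₀ + c 0 * u * z, ?_, by simpa using hy⟩
  have hev : p.eval (a₀ + c 0 * u * z)
      = ∑ k ∈ Finset.range (M + 3), c k * (c 0 * u * z) ^ k := by
    rw [← eval_eq_sum_range' (p := taylor a₀ p) (n := M + 3)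
      (by rw [natDegree_taylor]; omega), taylor_eval, add_comm]
  have hπw : (π w) ^ (M + 2) + (π w) ^ (M + 1) + ∑ k ∈ Finset.range (M + 1),
      (u * c (k + 2) * (c 0 * u) ^ (k + 1)) * (π w) ^ (M - k) = 0 := by
    have := congrArg π hw.eq_zero
    rw [hG, hr] at this
    simp only [eval_add, eval_pow, eval_X, eval_finsetSum, eval_mul, eval_C, map_add, map_pow,
      map_sum, map_mul, map_zero, hD'] at this
    rw [← this]; ring
  rw [IsRoot.def, ← ((hwu.map π).pow (M + 2)).mul_right_eq_zero, hev,
    Finset.sum_range_succ', Finset.sum_range_succ', mul_add, mul_add, Finset.mul_sum]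
  have hterm : ∀ k ∈ Finset.range (M + 1),
      (π w) ^ (M + 2) * (c (k + 1 + 1) * (c 0 * u * z) ^ (k + 1 + 1))
        = c 0 * ((u * c (k + 2) * (c 0 * u) ^ (k + 1)) * (π w) ^ (M - k)) := by
    intro k hk
    have hk' : k ≤ M := by simpa [Nat.lt_succ_iff] using hk
    have h1 : (π w) ^ (M + 2) = (π w) ^ (M - k) * (π w) ^ (k + 2) := by
      rw [← pow_add]; congr 1; omega
    have h2 : (π w) ^ (k + 2) * z ^ (k + 2) = 1 := by rw [← mul_pow, hz, one_pow]
    rw [h1, mul_pow]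
    linear_combination (π w) ^ (M - k) * c (k + 2) * (c 0 * u) ^ (k + 2) * h2
  rw [Finset.sum_congr rfl hterm, ← Finset.mul_sum]
  simp only [zero_add, pow_one, pow_zero, mul_one]
  linear_combination c 0 * hπw + (π w) ^ (M + 2) * c 0 * z * hu + (π w) ^ (M + 1) * c 0 * hz

/-- Terms used to bound the size of Henselizations. -/
inductive Tm (R : Type u) : Type u
  | of (r : R) : Tm R
  | add (s t : Tm R) : Tm R
  | mul (s t : Tm R) : Tm R
  | neg (s : Tm R) : Tm R
  | inv (s : Tm R) : Tm R
  | root (n : ℕ) (c : Fin n → Tm R) (a : Tm R) : Tm R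

open Classical in
/-- Evaluation of terms. -/
noncomputable def ev {R C : Type u} [CommRing R] [CommRing C] (J : Ideal C) (f : R →+* C) :
    Tm R → C
  | .of r => f r
  | .add s t => ev J f s + ev J f t
  | .mul s t => ev J f s * ev J f t
  | .neg s => - ev J f s
  | .inv s => Ring.inverse (ev J f s)
  | .root n c a =>
      if h : ∃ x, (X ^ n + ∑ i : Fin n, Polynomial.C (ev J f (c i)) * X ^ (i : ℕ)).IsRoot x ∧
        x - ev J f a ∈ J then h.choose else 0

/-- Henselian-closed subrings. -/
def IsCl {R C : Type u} [CommRing R] [CommRing C] (K : Ideal R) (f : R →+* C)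
    (S : Subring C) : Prop :=
  (∀ r, f r ∈ S) ∧ (∀ x ∈ S, ∀ y, x * y = 1 → y ∈ S) ∧
    ∀ p : C[X], p.Monic → (∀ i, p.coeff i ∈ S) → ∀ a₀ ∈ S,
      p.eval a₀ ∈ Submodule.span S (f '' K) → IsUnit (p.derivative.eval a₀) →
      ∀ a, p.IsRoot a → a - a₀ ∈ K.map f → a ∈ S

section
variable {R C : Type u} [CommRing R] [CommRing C] {K : Ideal R} {f : R →+* C}

lemma span_mono_ring {S T : Subring C} (h : S ≤ T) {x : C} {X : Set C}
    (hx : x ∈ Submodule.span S X) : x ∈ Submodule.span T X := by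
  induction hx using Submodule.span_induction with
  | mem x hx => exact Submodule.subset_span hx
  | zero => exact Submodule.zero_mem _
  | add x y _ _ hx hy => exact Submodule.add_mem _ hx hy
  | smul a x _ hx => exact Submodule.smul_mem _ (⟨a.1, h a.2⟩ : T) hx

lemma mem_span_iff {S : Subring C} (hS : ∀ r, f r ∈ S) (x : S) :
    (x : C) ∈ Submodule.span S (f '' K) ↔ x ∈ K.map (f.codRestrict S hS) := by
  have : Submodule.span S (f '' K)
      = Submodule.map (Algebra.linearMap S C) (K.map (f.codRestrict S hS)) := by
    rw [Ideal.map, Ideal.span, Submodule.map_span, ← Set.image_comp]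
    rfl
  rw [this, Submodule.mem_map]
  constructor
  · rintro ⟨y, hy, hyx⟩
    have : y = x := Subtype.ext hyx
    exact this ▸ hy
  · intro h
    exact ⟨x, h, rfl⟩

lemma span_le_map (S : Subring C) {x : C} (hx : x ∈ Submodule.span S (f '' K)) :
    x ∈ K.map f := by
  induction hx using Submodule.span_induction with
  | mem x hx => exact Submodule.subset_span hx
  | zero => exact Submodule.zero_mem _
  | add x y _ _ hx hy => exact Submodule.add_mem _ hx hy
  | smul a x _ hx => exact Ideal.mul_mem_left _ _ hx

lemma comap_jac (h : HenselianRing C (K.map f)) {S : Subring C} (hS : IsCl K f S) :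
    (K.map f).comap S.subtype ≤ Ideal.jacobson ⊥ := fun x hx => by
  rw [Ideal.mem_jacobson_bot]
  intro y
  obtain ⟨z, hz⟩ := (Ideal.mem_jacobson_bot.1 (h.jac hx) (y : C)).exists_right_inv
  have hzS : z ∈ S := hS.2.1 _ (x * y + 1 : S).2 z hz
  exact IsUnit.of_mul_eq_one ⟨z, hzS⟩ (Subtype.ext hz)

lemma cl_hens (h : HenselianRing C (K.map f)) {S : Subring C} (hS : IsCl K f S) :
    HenselianRing S (K.map (f.codRestrict S hS.1)) := by
  have hle : K.map (f.codRestrict S hS.1) ≤ (K.map f).comap S.subtype := fun x hx =>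
    span_le_map S ((mem_span_iff hS.1 x).2 hx)
  have hj := comap_jac h hS
  refine ⟨hle.trans hj, fun q hq a₀ h1 h2 => ?_⟩
  have hu := isUnit_of_quot (hle.trans hj) h2
  have e1 : ∀ (q : S[X]) (a : S), (q.map S.subtype).eval (a : C) = ((q.eval a : S) : C) :=
    fun q a => by rw [eval_map]; exact eval₂_at_apply S.subtype a
  have hu' : IsUnit ((q.map S.subtype).derivative.eval (a₀ : C)) := by
    rw [derivative_map, e1]
    exact hu.map S.subtype
  obtain ⟨a, ha, ha'⟩ := h.is_henselian (q.map S.subtype) (hq.map _) (a₀ : C)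
    (by rw [e1]; exact hle h1) (hu'.map _)
  have haS : a ∈ S := hS.2.2 (q.map S.subtype) (hq.map _)
    (fun i => by rw [coeff_map]; exact (q.coeff i).2) a₀ a₀.2
    (by rw [e1]; exact (mem_span_iff hS.1 _).2 h1) hu' a ha ha'
  have hr : q.IsRoot (⟨a, haS⟩ : S) := by
    apply Subtype.ext
    have := e1 q ⟨a, haS⟩
    rw [← this]; exact ha
  exact ⟨⟨a, haS⟩, hr, diff_mem hj q h1 hu (by exact ha') hr⟩

variable (K f) in
/-- The smallest closed subring. -/
def smin : Subring C := sInf {S | IsCl K f S}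

lemma smin_le {S : Subring C} (hS : IsCl K f S) : smin K f ≤ S := sInf_le hS

lemma smin_cl : IsCl K f (smin K f) := by
  refine ⟨fun r => ?_, fun x hx y hxy => ?_, fun p hp hc a₀ ha₀ h1 h2 a ha ha' => ?_⟩
  · exact Subring.mem_sInf.2 fun S hS => hS.1 r
  · exact Subring.mem_sInf.2 fun S hS => hS.2.1 x (smin_le hS hx) y hxy
  · exact Subring.mem_sInf.2 fun S hS => hS.2.2 p hp (fun i => smin_le hS (hc i)) a₀
      (smin_le hS ha₀) (span_mono_ring (smin_le hS) h1) h2 a ha ha'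

variable (K f) in
/-- The range of evaluation. -/
noncomputable def evRange : Subring C where
  carrier := Set.range (ev (K.map f) f)
  mul_mem' := by
    rintro _ _ ⟨s, rfl⟩ ⟨t, rfl⟩; exact ⟨.mul s t, by simp [ev]⟩
  one_mem' := ⟨.of 1, by simp [ev]⟩
  add_mem' := by
    rintro _ _ ⟨s, rfl⟩ ⟨t, rfl⟩; exact ⟨.add s t, by simp [ev]⟩
  zero_mem' := ⟨.of 0, by simp [ev]⟩
  neg_mem' := by
    rintro _ ⟨s, rfl⟩; exact ⟨.neg s, by simp [ev]⟩

lemma evRange_cl (h : HenselianRing C (K.map f)) : IsCl K f (evRange K f) := by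
  refine ⟨fun r => ⟨.of r, by simp [ev]⟩, ?_, fun p hp hc a₀ ha₀ h1 h2 a ha ha' => ?_⟩
  · rintro _ ⟨s, rfl⟩ y hxy
    refine ⟨.inv s, ?_⟩
    rw [ev]
    have hu : IsUnit (ev (K.map f) f s) := IsUnit.of_mul_eq_one y hxy
    rw [← mul_one (Ring.inverse _), ← hxy, ← mul_assoc, Ring.inverse_mul_cancel _ hu, one_mul]
  · choose c hc' using hc
    obtain ⟨t, rfl⟩ := ha₀
    refine ⟨.root p.natDegree (fun i => c i) t, ?_⟩
    have hp' : X ^ p.natDegree + ∑ i : Fin p.natDegree,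
        Polynomial.C (ev (K.map f) f (c i)) * X ^ (i : ℕ) = p := by
      conv_rhs => rw [hp.as_sum]
      rw [Fin.sum_univ_eq_sum_range (fun i => Polynomial.C (ev (K.map f) f (c i)) * X ^ i)]
      simp_rw [hc']
    rw [ev, hp']
    have hex : ∃ x, p.IsRoot x ∧ x - ev (K.map f) f t ∈ K.map f := ⟨a, ha, ha'⟩
    rw [dif_pos hex]
    exact root_unique h.jac p h2 hex.choose_spec.2 hex.choose_spec.1 ha' ha

end

/-- Index type of all small Henselian pairs under `(R, K)`. -/
structure Idx (R : Type u) [CommRing R] (K : Ideal R) : Type u where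
  X : Set (Tm R)
  ring : CommRing X
  f : R →+* X
  hens : HenselianRing X (K.map f)

attribute [instance] Idx.ring

lemma exists_henselization (R : Type u) [CommRing R] (K : Ideal R) :
    ∃ (H : Type u) (_ : CommRing H) (ρ : R →+* H), IsHenselization K ρ := by
  let F : R →+* (∀ i : Idx R K, i.X) := RingHom.pi fun i => i.f
  have hP : HenselianRing (∀ i : Idx R K, i.X) (K.map F) := by
    refine hens_mono (hens_pi (fun i : Idx R K => K.map i.f) fun i => i.hens) ?_
    rw [Ideal.map_le_iff_le_comap]
    intro x hx i
    exact Ideal.mem_map_of_mem i.f hx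
  have hcl : IsCl K F (smin K F) := smin_cl
  have hH := cl_hens hP hcl
  refine ⟨smin K F, inferInstance, F.codRestrict _ hcl.1, hH, ?_⟩
  intro C _ J hC g₀ hg₀
  have hC' := hens_mono hC hg₀
  apply existsUnique_of_exists_of_unique
  · have hScl : IsCl K g₀ (smin K g₀) := smin_cl
    have hS := cl_hens hC' hScl
    have hsurj : ∀ x : smin K g₀, ∃ t : Tm R, ev (K.map g₀) g₀ t = x := fun x =>
      smin_le (evRange_cl hC') x.2
    choose j hj using hsurj
    have hinj : Function.Injective j := fun x y hxy => by
      apply Subtype.ext; rw [← hj x, ← hj y, hxy]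
    let e : smin K g₀ ≃ Set.range j := Equiv.ofInjective j hinj
    let _ : CommRing (Set.range j) := e.symm.commRing
    let e' : Set.range j ≃+* smin K g₀ := e.symm.ringEquiv
    let φ : R →+* Set.range j := (e'.symm : smin K g₀ →+* Set.range j).comp
      (g₀.codRestrict _ hScl.1)
    have hφ : HenselianRing (Set.range j) (K.map φ) := by
      have := hens_quot hS (e'.symm : smin K g₀ →+* Set.range j) e'.symm.surjective
      rwa [Ideal.map_map] at this
    let i : Idx R K := ⟨Set.range j, inferInstance, φ, hφ⟩
    refine ⟨((smin K g₀).subtype.comp (e' : Set.range j →+* smin K g₀)).comp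
      ((Pi.evalRingHom (fun i : Idx R K => i.X) i).comp (smin K F).subtype), ?_⟩
    ext r
    change ((e' (e'.symm (g₀.codRestrict _ hScl.1 r)) : smin K g₀) : C) = g₀ r
    rw [e'.apply_symm_apply]; rfl
  · intro g g' hg hg'
    let S' : Subring (∀ i : Idx R K, i.X) := (g.eqLocus g').map (smin K F).subtype
    have hS'le : S' ≤ smin K F := by
      rintro _ ⟨x, -, rfl⟩; exact x.2
    have hS'eq : ∀ x : smin K F, (x : ∀ i : Idx R K, i.X) ∈ S' → g x = g' x := by
      rintro x ⟨y, hy, hyx⟩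
      have : y = x := Subtype.ext hyx
      exact this ▸ hy
    have hgK : K.map (F.codRestrict _ hcl.1) ≤ J.comap g := by
      rw [← Ideal.map_le_iff_le_comap, Ideal.map_map, hg]; exact hg₀
    have hgK' : K.map (F.codRestrict _ hcl.1) ≤ J.comap g' := by
      rw [← Ideal.map_le_iff_le_comap, Ideal.map_map, hg']; exact hg₀
    have hcl' : IsCl K F S' := by
      refine ⟨fun r => ⟨F.codRestrict _ hcl.1 r, ?_, rfl⟩, ?_, ?_⟩
      · exact (RingHom.congr_fun hg r).trans (RingHom.congr_fun hg' r).symm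
      · intro x hx y hxy
        have hyH := hcl.2.1 x (hS'le hx) y hxy
        refine ⟨⟨y, hyH⟩, ?_, rfl⟩
        have h1 : (⟨x, hS'le hx⟩ : smin K F) * ⟨y, hyH⟩ = 1 := Subtype.ext hxy
        have e1 := congrArg g h1
        have e2 := congrArg g' h1
        have e3 := hS'eq ⟨x, hS'le hx⟩ hx
        rw [map_mul, map_one] at e1 e2
        rw [← e3] at e2
        change g _ = g' _
        calc g ⟨y, hyH⟩ = g ⟨y, hyH⟩ * (g ⟨x, hS'le hx⟩ * g' ⟨y, hyH⟩) := by rw [e2, mul_one]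
          _ = (g ⟨x, hS'le hx⟩ * g ⟨y, hyH⟩) * g' ⟨y, hyH⟩ := by ring
          _ = g' ⟨y, hyH⟩ := by rw [e1, one_mul]
      · intro p hp hc a₀ ha₀ h1 h2 a ha ha'
        have h1' := span_mono_ring hS'le h1
        have haH := hcl.2.2 p hp (fun i => hS'le (hc i)) a₀ (hS'le ha₀) h1' h2 a ha ha'
        refine ⟨⟨a, haH⟩, ?_, rfl⟩
        obtain ⟨q, hq⟩ : ∃ q : (smin K F)[X], q.map (smin K F).subtype = p := by
          have : p ∈ Polynomial.lifts (smin K F).subtype := by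
            rw [Polynomial.lifts_iff_coeff_lifts]
            intro n
            exact ⟨⟨_, hS'le (hc n)⟩, rfl⟩
          simpa [Polynomial.mem_lifts] using this
        have e1 : ∀ (q : (smin K F)[X]) (a : smin K F),
            (q.map (smin K F).subtype).eval (a : ∀ i : Idx R K, i.X) = ((q.eval a : smin K F) :
              ∀ i : Idx R K, i.X) :=
          fun q a => by rw [eval_map]; exact eval₂_at_apply (smin K F).subtype a
        set b : smin K F := ⟨a, haH⟩
        set b₀ : smin K F := ⟨a₀, hS'le ha₀⟩
        have hroot : q.IsRoot b := by
          apply Subtype.ext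
          rw [← e1 q b, hq]; exact ha
        have hunit : IsUnit (q.derivative.eval b₀) := by
          rw [← hq, derivative_map, show a₀ = (b₀ : ∀ i : Idx R K, i.X) from rfl, e1] at h2
          obtain ⟨z, hz⟩ := h2.exists_right_inv
          have hzS := hcl.2.1 _ (q.derivative.eval b₀).2 z hz
          exact IsUnit.of_mul_eq_one ⟨z, hzS⟩ (Subtype.ext hz)
        have hev : q.eval b₀ ∈ K.map (F.codRestrict _ hcl.1) := by
          rw [← mem_span_iff, ← e1, hq]; exact h1'
        have hdiff : b - b₀ ∈ K.map (F.codRestrict _ hcl.1) :=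
          diff_mem (comap_jac hP hcl) q hev hunit (by exact ha') hroot
        have hqq : q.map g = q.map g' := by
          ext n
          rw [coeff_map, coeff_map]
          apply hS'eq
          have : ((q.coeff n : smin K F) : ∀ i : Idx R K, i.X) = p.coeff n := by
            rw [← hq, coeff_map]; rfl
          rw [this]; exact hc n
        have hb₀ : g b₀ = g' b₀ := hS'eq b₀ ha₀
        have e2 : ∀ (g : smin K F →+* C) (q : (smin K F)[X]) (a : smin K F),
            (q.map g).eval (g a) = g (q.eval a) :=
          fun g q a => by rw [eval_map]; exact eval₂_at_apply g a
        change g b = g' b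
        refine root_unique hC.jac (q.map g) (a₀ := g b₀) ?_ ?_ ?_ ?_ ?_
        · rw [derivative_map, e2]; exact hunit.map g
        · rw [← map_sub]; exact hgK hdiff
        · rw [IsRoot.def, e2, hroot.eq_zero, map_zero]
        · rw [hb₀, ← map_sub]; exact hgK' hdiff
        · rw [hqq, IsRoot.def, e2, hroot.eq_zero, map_zero]
    ext x
    exact hS'eq x (smin_le hcl' x.2)

end HensAux

namespace HensAux

section conormal
open MvPolynomial Algebra

lemma conormal {k S : Type u} [CommRing k] [CommRing S] [Algebra k S] [Algebra.FormallyEtale k S]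
    {n : ℕ} (val : Fin n → S) (hval : Function.Surjective (aeval (R := k) val)) :
    ∃ g : Fin n → MvPolynomial (Fin n) k, (∀ i, aeval val (g i) = 0) ∧
      (∀ i j, aeval val (pderiv j (g i)) = if i = j then 1 else 0) ∧
      RingHom.ker (aeval (R := k) val) ≤
        Ideal.span (Set.range g) ⊔ RingHom.ker (aeval (R := k) val) ^ 2 := by
  classical
  let P := Algebra.Generators.ofSurjective val hval
  have hinj : Function.Injective P.toExtension.cotangentComplex :=
    (Extension.subsingleton_h1Cotangent P.toExtension).mp P.equivH1Cotangent.subsingleton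
  have hsurj : Function.Surjective P.toExtension.cotangentComplex := fun y =>
    (Extension.exact_cotangentComplex_toKaehler (P := P.toExtension) y).mp
      (Subsingleton.elim _ _)
  have hker : P.toExtension.ker = RingHom.ker (aeval (R := k) val) := by
    ext x
    exact Iff.rfl
  have hrep : ∀ (x : P.toExtension.ker) (i : Fin n),
      P.cotangentSpaceBasis.repr (P.toExtension.cotangentComplex (Extension.Cotangent.mk x)) i
        = aeval val (pderiv i (show MvPolynomial (Fin n) k from x.1)) := by
    intro x i
    rw [Extension.cotangentComplex_mk]
    exact P.cotangentSpaceBasis_repr_one_tmul _ _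
  have hz : ∀ y : MvPolynomial (Fin n) k, aeval val y = 0 →
      (∀ i, aeval val (pderiv i y) = 0) → y ∈ RingHom.ker (aeval (R := k) val) ^ 2 := by
    intro y hy hy'
    have hy0 : y ∈ P.toExtension.ker := by rw [hker]; exact hy
    have : (Extension.Cotangent.mk (⟨y, hy0⟩ : P.toExtension.ker)) = 0 := by
      apply hinj
      rw [map_zero]
      apply P.cotangentSpaceBasis.repr.injective
      ext i
      rw [hrep, map_zero]
      exact hy' i
    rw [← hker]
    exact (Extension.Cotangent.mk_eq_zero_iff _).1 this
  have hg : ∀ i, ∃ g : MvPolynomial (Fin n) k, aeval val g = 0 ∧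
      ∀ j, aeval val (pderiv j g) = if i = j then 1 else 0 := by
    intro i
    obtain ⟨c, hc⟩ := hsurj (P.cotangentSpaceBasis i)
    obtain ⟨⟨G, hG'⟩, hG⟩ := Extension.Cotangent.mk_surjective c
    refine ⟨G, by rw [hker] at hG'; exact hG', fun j => ?_⟩
    have := hrep ⟨G, hG'⟩ j
    refine this.symm.trans ?_
    rw [hG, hc, Module.Basis.repr_self, Finsupp.single_apply]
  clear hrep hker hinj hsurj
  choose G hG0 hG1 using hg
  refine ⟨G, hG0, hG1, ?_⟩
  intro x hx
  have hx0 : aeval val x = 0 := hx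
  have hx1 : x = (∑ j, pderiv j x * G j) +
    (x - ∑ j, pderiv j x * G j) := by ring
  rw [hx1]
  refine Ideal.add_mem _ (Ideal.mem_sup_left ?_) (Ideal.mem_sup_right ?_)
  · exact Ideal.sum_mem _ fun j _ => Ideal.mul_mem_left _ _ (Ideal.subset_span ⟨j, rfl⟩)
  · apply hz
    · simp [hx0, hG0]
    · intro i
      simp only [map_sub, map_sum, Derivation.leibniz, map_add, smul_eq_mul, map_mul, hG0, hG1]
      simp

end conormal

section etale
open MvPolynomial Algebra

lemma etale_loc {A : Type u} [CommRing A] {n : ℕ} (g : Fin n → MvPolynomial (Fin n) A)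
    (d t : MvPolynomial (Fin n) A)
    (hd : d = (Matrix.of fun i j => pderiv i (g j)).det) :
    Algebra.Etale A (Localization.Away
      (Ideal.Quotient.mk (Ideal.span (Set.range g)) (t * d))) := by
  let Q := MvPolynomial (Fin n) A ⧸ Ideal.span (Set.range g)
  let τ : Q := Ideal.Quotient.mk (Ideal.span (Set.range g)) (t * d)
  let P1 : PreSubmersivePresentation A Q (Fin n) (Fin n) :=
    PreSubmersivePresentation.naive (v := g) id Function.injective_id
  have hj : P1.jacobian = Ideal.Quotient.mk _ d := by
    rw [PreSubmersivePresentation.jacobian_eq_jacobiMatrix_det, hd]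
    have : P1.jacobiMatrix = (Matrix.of fun i j => pderiv i (g j)) := by
      refine Matrix.ext fun i j => ?_
      exact P1.jacobiMatrix_apply i j
    rw [this]
    rfl
  let P2 := PreSubmersivePresentation.localizationAway (Localization.Away τ) τ
  have hτ : IsUnit (algebraMap Q (Localization.Away τ) τ) :=
    IsLocalization.Away.algebraMap_isUnit τ
  let P : SubmersivePresentation A (Localization.Away τ) _ _ :=
    { __ := P2.comp P1
      jacobian_isUnit := by
        rw [PreSubmersivePresentation.comp_jacobian_eq_jacobian_smul_jacobian, hj,
          PreSubmersivePresentation.localizationAway_jacobian, Algebra.smul_def]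
        refine IsUnit.mul ?_ hτ
        have : τ = Ideal.Quotient.mk _ t * Ideal.Quotient.mk _ d := map_mul _ _ _
        rw [this, map_mul] at hτ
        exact isUnit_of_mul_isUnit_right hτ }
  have : Algebra.IsStandardSmoothOfRelativeDimension 0 A (Localization.Away τ) :=
    ⟨_, _, _, inferInstance, P, by
      simp only [PreSubmersivePresentation.dimension_comp_eq_dimension_add_dimension, P]
      simp [Algebra.Presentation.dimension]⟩
  exact (inferInstance : Algebra.Etale A (Localization.Away τ))

end etale

section construct
open MvPolynomial Algebra

lemma stepA {A R0 k S : Type u} [CommRing A] [CommRing R0] [CommRing k] [CommRing S]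
    [Algebra A R0] [Algebra A k] [Algebra k S] [Algebra R0 S] [Algebra A S]
    [IsScalarTower A k S] [IsScalarTower A R0 S] [Algebra.FormallyEtale k S]
    (I : Ideal A) {n : ℕ} (f0 : MvPolynomial (Fin n) A →ₐ[A] R0) (hf0 : Function.Surjective f0)
    (hfg : (RingHom.ker f0).FG)
    (hk : Function.Surjective (algebraMap A k)) (hkk : RingHom.ker (algebraMap A k) = I)
    (hS : Function.Surjective (algebraMap R0 S))
    (hkS : RingHom.ker (algebraMap R0 S) = I.map (algebraMap A R0)) :
    ∃ (g : Fin n → MvPolynomial (Fin n) A) (t : MvPolynomial (Fin n) A),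
      (∀ i, f0 (g i) = 0) ∧ f0 t = 1 ∧
      (∀ x, f0 x = 0 → t * x ∈ Ideal.span (Set.range g) ⊔ I.map (C : A →+* _)) ∧
      f0 (Matrix.of fun i j => pderiv i (g j)).det - 1 ∈ I.map (algebraMap A R0) := by
  classical
  let val : Fin n → S := fun i => algebraMap R0 S (f0 (X i))
  let μ : MvPolynomial (Fin n) A →+* MvPolynomial (Fin n) k := map (algebraMap A k)
  have hμ : Function.Surjective μ := map_surjective _ hk
  have hμk : RingHom.ker μ = I.map C := by rw [← hkk]; exact ker_map _
  have hc : ∀ p, aeval (R := k) val (μ p) = algebraMap R0 S (f0 p) := by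
    intro p
    have : ((aeval (R := k) val : MvPolynomial (Fin n) k →+* S).comp μ) =
        (algebraMap R0 S).comp (f0 : MvPolynomial (Fin n) A →+* R0) := by
      apply MvPolynomial.ringHom_ext
      · intro a
        have : f0 (C a) = algebraMap A R0 a := f0.commutes a
        simp [μ, this, ← IsScalarTower.algebraMap_apply]
      · intro i; simp [μ, val]
    exact congr($this p)
  have hval : Function.Surjective (aeval (R := k) val) := by
    intro s
    obtain ⟨r, rfl⟩ := hS s
    obtain ⟨p, rfl⟩ := hf0 r
    exact ⟨μ p, hc p⟩
  have hIf : (I.map (C : A →+* MvPolynomial (Fin n) A)).map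
      (f0 : MvPolynomial (Fin n) A →+* R0) = I.map (algebraMap A R0) := by
    rw [Ideal.map_map]
    congr 1
    ext a
    exact f0.commutes a
  have hlift : ∀ p, aeval (R := k) val p = 0 → ∃ x, f0 x = 0 ∧ μ x = p := by
    intro p hp
    obtain ⟨p, rfl⟩ := hμ p
    rw [hc] at hp
    have : f0 p ∈ I.map (algebraMap A R0) := by rw [← hkS]; exact hp
    rw [← hIf] at this
    obtain ⟨q, hq, hq'⟩ := (Ideal.mem_map_iff_of_surjective
      (f0 : MvPolynomial (Fin n) A →+* R0) hf0).1 this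
    rw [← hμk] at hq
    refine ⟨p - q, ?_, ?_⟩
    · rw [map_sub, sub_eq_zero]; exact hq'.symm
    · rw [map_sub, (show μ q = 0 from hq), sub_zero]
  obtain ⟨gb, hg0, hg1, hg2⟩ := conormal val hval
  choose g hg hgμ using fun i => hlift (gb i) (hg0 i)
  have hkerm : (RingHom.ker f0).map μ = RingHom.ker (aeval (R := k) val) := by
    apply le_antisymm
    · rw [Ideal.map_le_iff_le_comap]
      intro x hx
      rw [Ideal.mem_comap, RingHom.mem_ker, hc, (show f0 x = 0 from hx), map_zero]
    · intro p hp
      obtain ⟨x, hx, rfl⟩ := hlift p hp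
      exact Ideal.mem_map_of_mem _ hx
  have hspan : (Ideal.span (Set.range g)).map μ = Ideal.span (Set.range gb) := by
    rw [Ideal.map_span, ← Set.range_comp]
    congr 2
    funext i; exact hgμ i
  have hle : RingHom.ker f0 ≤ (Ideal.span (Set.range g) ⊔ I.map C) ⊔
      RingHom.ker f0 • RingHom.ker f0 := by
    intro x hx
    have h1 : μ x ∈ (Ideal.span (Set.range g) ⊔ RingHom.ker f0 ^ 2).map μ := by
      rw [Ideal.map_sup, Ideal.map_pow, hkerm, hspan]
      apply hg2
      rw [← hkerm]
      exact Ideal.mem_map_of_mem _ hx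
    obtain ⟨y, hy, hxy⟩ := (Ideal.mem_map_iff_of_surjective μ hμ).1 h1
    have h2 : x - y ∈ I.map C := by
      rw [← hμk, RingHom.mem_ker, map_sub, hxy, sub_self]
    have : x = y + (x - y) := by ring
    rw [this, smul_eq_mul, ← pow_two]
    refine Ideal.add_mem _ ?_ (Ideal.mem_sup_left (Ideal.mem_sup_right h2))
    exact (sup_le_sup_right le_sup_left _ : Ideal.span (Set.range g) ⊔ RingHom.ker f0 ^ 2 ≤ _) hy
  obtain ⟨t, ht, ht'⟩ := Submodule.exists_sub_one_mem_and_smul_le_of_fg_of_le_sup hfg le_rfl hle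
  refine ⟨g, t, hg, ?_, ?_, ?_⟩
  · have : f0 (t - 1) = 0 := ht
    rwa [map_sub, map_one, sub_eq_zero] at this
  · intro x hx
    exact ht' (Submodule.smul_mem_pointwise_smul x t _ hx)
  · rw [← hkS, RingHom.mem_ker, map_sub, map_one, sub_eq_zero, ← hc]
    have : (((aeval (R := k) val : MvPolynomial (Fin n) k →+* S).comp μ).mapMatrix
        (Matrix.of fun i j => pderiv i (g j))) = 1 := by
      refine Matrix.ext fun i j => ?_
      have : (aeval (R := k) val) (μ (pderiv i (g j))) = if j = i then 1 else 0 := by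
        rw [← hg1, ← hgμ, pderiv_map]
      rw [Matrix.one_apply]
      simp only [eq_comm (a := i)]
      exact this
    have h2 := RingHom.map_det ((aeval (R := k) val : MvPolynomial (Fin n) k →+* S).comp μ)
      (Matrix.of fun i j => pderiv i (g j))
    rw [this, Matrix.det_one] at h2
    exact h2

lemma stepB {A R0 k S : Type u} [CommRing A] [CommRing R0] [CommRing k] [CommRing S]
    [Algebra A R0] [Algebra A k] [Algebra k S] [Algebra R0 S] [Algebra A S]
    [IsScalarTower A k S] [IsScalarTower A R0 S] [Algebra.FormallyEtale k S]
    (I : Ideal A) [hfp : Algebra.FinitePresentation A R0]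
    (hk : Function.Surjective (algebraMap A k)) (hkk : RingHom.ker (algebraMap A k) = I)
    (hS : Function.Surjective (algebraMap R0 S))
    (hkS : RingHom.ker (algebraMap R0 S) = I.map (algebraMap A R0)) :
    ∃ (R : Type u) (_ : CommRing R) (_ : Algebra A R) (𝔣 : Ideal R) (q : R0 →+* R ⧸ 𝔣) (s : R0),
      Algebra.Etale A R ∧ 𝔣.FG ∧ 𝔣 ≤ I.map (algebraMap A R) ∧
      q.comp (algebraMap A R0) = (Ideal.Quotient.mk 𝔣).comp (algebraMap A R) ∧
      s - 1 ∈ I.map (algebraMap A R0) ∧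
      (∀ (C : Type u) [CommRing C] (f : R0 →+* C), IsUnit (f s) →
        ∃ g : R ⧸ 𝔣 →+* C, g.comp q = f) ∧
      (∀ (C : Type u) [CommRing C] (g g' : R ⧸ 𝔣 →+* C), g.comp q = g'.comp q → g = g') := by
  obtain ⟨n, f0, hf0, hfg⟩ := hfp
  obtain ⟨g, t, hg, ht, hgt, hd⟩ := stepA I f0 hf0 hfg hk hkk hS hkS
  set d := (Matrix.of fun i j => pderiv i (g j)).det with hd'
  have het := etale_loc g d t hd'
  let Q := MvPolynomial (Fin n) A ⧸ Ideal.span (Set.range g)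
  let τ : Q := Ideal.Quotient.mk (Ideal.span (Set.range g)) (t * d)
  let R := Localization.Away τ
  let φ : MvPolynomial (Fin n) A →+* R := (algebraMap Q R).comp (Ideal.Quotient.mk _)
  have hφA : φ.comp C = algebraMap A R := rfl
  have hφg : ∀ i, φ (g i) = 0 := by
    intro i
    have : (Ideal.Quotient.mk (Ideal.span (Set.range g))) (g i) = 0 :=
      Ideal.Quotient.eq_zero_iff_mem.2 (Ideal.subset_span ⟨i, rfl⟩)
    exact (congrArg (algebraMap Q R) this).trans (map_zero _)
  have hφτ : IsUnit (φ (t * d)) := IsLocalization.Away.algebraMap_isUnit τ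
  have hφepi : ∀ (C : Type u) [CommRing C] (g g' : R →+* C), g.comp φ = g'.comp φ → g = g' := by
    intro C _ g g' h
    apply IsLocalization.ringHom_ext (Submonoid.powers τ)
    apply Ideal.Quotient.ringHom_ext
    exact h
  have hφlift : ∀ (C : Type u) [CommRing C] (f : MvPolynomial (Fin n) A →+* C),
      (∀ i, f (g i) = 0) → IsUnit (f (t * d)) → ∃ h : R →+* C, h.comp φ = f := by
    intro C _ f h1 h2
    let f1 : Q →+* C := Ideal.Quotient.lift _ f (by
      intro a ha
      have : Ideal.span (Set.range g) ≤ RingHom.ker f := by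
        rw [Ideal.span_le]
        rintro _ ⟨i, rfl⟩
        exact h1 i
      exact this ha)
    have h3 : IsUnit (f1 τ) := h2
    refine ⟨IsLocalization.Away.lift τ h3, ?_⟩
    refine RingHom.ext fun x => ?_
    exact (IsLocalization.Away.lift_eq τ h3 (Ideal.Quotient.mk _ x)).trans rfl
  clear_value φ
  let 𝔣 : Ideal R := (RingHom.ker f0).map φ
  have hmap : (I.map (C : A →+* MvPolynomial (Fin n) A)).map φ = I.map (algebraMap A R) := by
    rw [Ideal.map_map, hφA]
  have hq : ∀ x, f0 x = 0 → (Ideal.Quotient.mk 𝔣) (φ x) = 0 := fun x hx =>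
    Ideal.Quotient.eq_zero_iff_mem.2 (Ideal.mem_map_of_mem _ hx)
  obtain ⟨q, hqq⟩ : ∃ q : R0 →+* R ⧸ 𝔣, ∀ x, q (f0 x) = Ideal.Quotient.mk 𝔣 (φ x) := by
    refine ⟨(RingHom.liftOfSurjective (f0 : MvPolynomial (Fin n) A →+* R0) hf0)
      ⟨(Ideal.Quotient.mk 𝔣).comp φ, fun x hx => hq x hx⟩, fun x => ?_⟩
    exact RingHom.liftOfRightInverse_comp_apply _ _ _ _ x
  refine ⟨R, inferInstance, inferInstance, 𝔣, q, f0 (t * d), het, hfg.map _, ?_, ?_, ?_, ?_, ?_⟩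
  · rw [Ideal.map_le_iff_le_comap]
    intro x hx
    rw [Ideal.mem_comap]
    have h1 := Ideal.mem_map_of_mem φ (hgt x hx)
    rw [Ideal.map_sup, hmap, Ideal.map_span] at h1
    have h2 : Ideal.span (φ '' Set.range g) = ⊥ := by
      rw [Ideal.span_eq_bot]
      rintro _ ⟨_, ⟨i, rfl⟩, rfl⟩
      exact hφg i
    rw [h2, bot_sup_eq, map_mul] at h1
    rw [map_mul] at hφτ
    exact (Ideal.unit_mul_mem_iff_mem _ (isUnit_of_mul_isUnit_left hφτ)).1 h1
  · ext a
    have : f0 (C a) = algebraMap A R0 a := f0.commutes a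
    rw [RingHom.comp_apply, ← this, hqq, ← hφA]
    rfl
  · rwa [map_mul, ht, one_mul]
  · intro C' _ f hf
    obtain ⟨h, hh⟩ := hφlift C' (f.comp (f0 : MvPolynomial (Fin n) A →+* R0)) (fun i => by
      change f (f0 (g i)) = 0
      rw [hg, map_zero]) hf
    refine ⟨Ideal.Quotient.lift 𝔣 h ?_, ?_⟩
    · intro a ha
      have : 𝔣 ≤ RingHom.ker h := by
        rw [Ideal.map_le_iff_le_comap]
        intro x hx
        change h (φ x) = 0
        have := congr($hh x)
        rw [RingHom.comp_apply] at this
        rw [this]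
        change f (f0 x) = 0
        rw [show f0 x = 0 from hx, map_zero]
      exact this ha
    · ext x
      obtain ⟨x, rfl⟩ := hf0 x
      rw [RingHom.comp_apply, hqq]
      exact congr($hh x)
  · intro C' _ g1 g2 h
    apply Ideal.Quotient.ringHom_ext
    apply hφepi
    refine RingHom.ext fun x => ?_
    have := congr($h (f0 x))
    rw [RingHom.comp_apply, RingHom.comp_apply, hqq] at this
    exact this

end construct

section fe

lemma hens_bot {C : Type*} [CommRing C] : HenselianRing C (⊥ : Ideal C) :=
  hens_nilp (N := 1) (pow_one _)

lemma formallyEtale_quot {A B R0 k S : Type u} [CommRing A] [CommRing B] [CommRing R0] [CommRing k]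
    [CommRing S] [Algebra A B]
    [Algebra A R0] [Algebra A k] [Algebra k S] [Algebra R0 S] [Algebra A S]
    [IsScalarTower A k S] [IsScalarTower A R0 S] (I : Ideal A)
    (hk : Function.Surjective (algebraMap A k)) (hkk : RingHom.ker (algebraMap A k) = I)
    (hS : Function.Surjective (algebraMap R0 S))
    (hkS : RingHom.ker (algebraMap R0 S) = I.map (algebraMap A R0))
    (ρ : R0 →+* B) (hρ : ρ.comp (algebraMap A R0) = algebraMap A B)
    (hH : IsHenselization (I.map (algebraMap A R0)) ρ)
    (hfe : IsHFormallyEtale (algebraMap A B) I) : Algebra.FormallyEtale k S := by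
  rw [Algebra.FormallyEtale.iff_comp_bijective]
  intro E _ _ 𝔧 h𝔧
  let e : A →+* E := (algebraMap k E).comp (algebraMap A k)
  have hIk : ∀ a ∈ I, algebraMap A k a = 0 := fun a ha => by
    rw [← hkk] at ha; exact ha
  have he : I.map e = ⊥ := by
    rw [eq_bot_iff, Ideal.map_le_iff_le_comap]
    intro a ha
    change algebraMap k E (algebraMap A k a) = 0
    rw [hIk a ha, map_zero]
  let p := Ideal.Quotient.mk 𝔧
  have hce : I.map (p.comp e) = ⊥ := by
    rw [← Ideal.map_map, he, Ideal.map_bot]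
  have key : ∀ {C : Type u} [CommRing C] (f : R0 →+* C), (I.map (f.comp (algebraMap A R0)) = ⊥) →
      ∃! g : B →+* C, g.comp ρ = f := by
    intro C _ f hf
    exact hH.2 C ⊥ hens_bot f (by rw [Ideal.map_map, hf])
  have hS0 : ∀ {C : Type u} [CommRing C] [Algebra k C] (h : S →ₐ[k] C),
      ((h : S →+* C).comp (algebraMap R0 S)).comp (algebraMap A R0)
        = (algebraMap k C).comp (algebraMap A k) := by
    intro C _ _ h
    ext a
    simp only [RingHom.comp_apply, ← IsScalarTower.algebraMap_apply]
    rw [IsScalarTower.algebraMap_apply A k S]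
    exact h.commutes _
  have hfe' := fun u hu => hfe E (E ⧸ 𝔧) e (p.comp e) p u rfl hu
    ⟨1, le_rfl, by rw [pow_one, he], by rw [pow_one, hce]⟩ Ideal.Quotient.mk_surjective
    ⟨2, by norm_num, by rw [Ideal.mk_ker, h𝔧]⟩
  constructor
  · intro h1 h2 h12
    obtain ⟨v1, hv1, -⟩ := key ((h1 : S →+* E).comp (algebraMap R0 S)) (by rw [hS0]; exact he)
    obtain ⟨v2, hv2, -⟩ := key ((h2 : S →+* E).comp (algebraMap R0 S)) (by rw [hS0]; exact he)
    have hA1 : v1.comp (algebraMap A B) = e := by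
      rw [← hρ, ← RingHom.comp_assoc]; rw [hv1, hS0]
    have hA2 : v2.comp (algebraMap A B) = e := by
      rw [← hρ, ← RingHom.comp_assoc]; rw [hv2, hS0]
    have hp : p.comp v1 = p.comp v2 := by
      obtain ⟨w, -, hw⟩ := key (p.comp ((h1 : S →+* E).comp (algebraMap R0 S))) (by
        rw [RingHom.comp_assoc, hS0]; exact hce)
      rw [hw (p.comp v1) (by simp only at hv1 ⊢; rw [RingHom.comp_assoc, hv1]),
        hw (p.comp v2) (by
          simp only at hv2 ⊢; rw [RingHom.comp_assoc, hv2]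
          ext x
          exact congr($h12 (algebraMap R0 S x)).symm)]
    have huv := (hfe' (p.comp v2) (by rw [RingHom.comp_assoc, hA2])).unique
      ⟨hA1, hp⟩ ⟨hA2, rfl⟩
    ext x
    obtain ⟨x, rfl⟩ := hS x
    have e1 := congr($hv1 x)
    have e2 := congr($hv2 x)
    rw [huv] at e1
    exact e1.symm.trans e2
  · intro h
    obtain ⟨u, hu, hu'⟩ := key ((h : S →+* (E ⧸ 𝔧)).comp (algebraMap R0 S)) (by
      rw [hS0]; exact hce)
    obtain ⟨v, ⟨hv1, hv2⟩, -⟩ := hfe' u (by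
      rw [← hρ, ← RingHom.comp_assoc]; rw [hu, hS0]; rfl)
    have hker : ∀ x, algebraMap R0 S x = 0 → (v.comp ρ) x = 0 := by
      intro x hx
      have hx' : x ∈ I.map (algebraMap A R0) := by rw [← hkS]; exact hx
      have : I.map (algebraMap A R0) ≤ RingHom.ker (v.comp ρ) := by
        rw [Ideal.map_le_iff_le_comap]
        intro a ha
        change ((v.comp ρ).comp (algebraMap A R0)) a = 0
        rw [RingHom.comp_assoc, hρ, hv1]
        have := Ideal.mem_map_of_mem e ha
        rwa [he] at this
      exact this hx'
    obtain ⟨w, hw⟩ : ∃ w : S →+* E, ∀ x, w (algebraMap R0 S x) = v (ρ x) :=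
      ⟨(RingHom.liftOfSurjective (algebraMap R0 S) hS) ⟨v.comp ρ, fun x hx => hker x hx⟩,
        fun x => RingHom.liftOfRightInverse_comp_apply _ _ _ _ x⟩
    refine ⟨{ w with commutes' := ?_ }, ?_⟩
    · intro r
      obtain ⟨a, rfl⟩ := hk r
      change w _ = _
      rw [← IsScalarTower.algebraMap_apply, IsScalarTower.algebraMap_apply A R0 S, hw]
      have := congr($hv1 a)
      rw [← hρ] at this
      exact this
    · ext x
      obtain ⟨x, rfl⟩ := hS x
      change p (w (algebraMap R0 S x)) = h (algebraMap R0 S x)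
      rw [hw]
      have h1 := congr($hv2 (ρ x))
      have h2 := congr($hu x)
      exact h1.trans h2

end fe

section final

lemma f_le {A B R0 R : Type u} [CommRing A] [CommRing B] [CommRing R0] [CommRing R]
    [Algebra A B] [Algebra A R0] [Algebra A R] [Algebra.Etale A R] (I : Ideal A)
    (ρ0 : R0 →+* B) (hρ : ρ0.comp (algebraMap A R0) = algebraMap A B)
    (hH : IsHenselization (I.map (algebraMap A R0)) ρ0)
    (hfe : IsHFormallyEtale (algebraMap A B) I)
    (𝔣 : Ideal R) (h𝔣 : 𝔣 ≤ I.map (algebraMap A R)) (q : R0 →+* R ⧸ 𝔣)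
    (hq : q.comp (algebraMap A R0) = (Ideal.Quotient.mk 𝔣).comp (algebraMap A R))
    (hepi : ∀ (C : Type u) [CommRing C] (g g' : R ⧸ 𝔣 →+* C), g.comp q = g'.comp q → g = g')
    (j : R ⧸ 𝔣 →+* B) (hj : j.comp q = ρ0) (r : ℕ) (hr : 1 ≤ r) :
    𝔣 ≤ (I ^ r).map (algebraMap A R) := by
  let Ir : Ideal R := (I ^ r).map (algebraMap A R)
  let E := R ⧸ Ir
  let C := R ⧸ (Ir ⊔ 𝔣)
  let p : E →+* C := Ideal.Quotient.factor le_sup_left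
  let m : R ⧸ 𝔣 →+* C := Ideal.Quotient.factor le_sup_right
  let e : A →+* E := (Ideal.Quotient.mk Ir).comp (algebraMap A R)
  have hp : Function.Surjective p := Ideal.Quotient.factor_surjective _
  have he : (I ^ r).map e = ⊥ := by
    rw [← Ideal.map_map]
    exact Ideal.map_quotient_self _
  have hce : (I ^ r).map (p.comp e) = ⊥ := by
    rw [← Ideal.map_map, he, Ideal.map_bot]
  have hkp : RingHom.ker p ^ r = ⊥ := by
    have h1 : RingHom.ker p ≤ I.map e := by
      intro x hx
      obtain ⟨x, rfl⟩ := Ideal.Quotient.mk_surjective x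
      have hx' : Ideal.Quotient.mk (Ir ⊔ 𝔣) x = 0 := hx
      rw [Ideal.Quotient.eq_zero_iff_mem] at hx'
      have h2 : Ir ⊔ 𝔣 ≤ I.map (algebraMap A R) :=
        sup_le (Ideal.map_mono (Ideal.pow_le_self (by omega))) h𝔣
      rw [← Ideal.map_map]
      exact Ideal.mem_map_of_mem _ (h2 hx')
    rw [eq_bot_iff, ← he, Ideal.map_pow]
    exact Ideal.pow_right_mono h1 r
  have hf : (m.comp q).comp (algebraMap A R0) = p.comp e := by
    rw [RingHom.comp_assoc, hq]
    rfl
  obtain ⟨u, hu, -⟩ := hH.2 C (I.map (p.comp e)) (hens_nilp (N := r) (by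
    rw [← Ideal.map_pow, hce])) (m.comp q) (by rw [Ideal.map_map, hf])
  have huj : u.comp j = m := hepi _ _ _ (by rw [RingHom.comp_assoc, hj]; exact hu)
  obtain ⟨v, ⟨hv1, hv2⟩, -⟩ := hfe E C e (p.comp e) p u rfl (by
      rw [← hρ, ← RingHom.comp_assoc, ← hf]
      exact congrArg (fun z => RingHom.comp z _) hu)
    ⟨r, hr, he, hce⟩ hp ⟨r, hr, hkp⟩
  let w : R →+* E := (v.comp j).comp (Ideal.Quotient.mk 𝔣)
  have hw : w.comp (algebraMap A R) = e := by
    rw [RingHom.comp_assoc, ← hq, ← hv1, ← hρ, ← hj]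
    rfl
  let g1 : R →ₐ[A] E := { w with commutes' := fun a => congr($hw a) }
  let g2 : R →ₐ[A] E := Ideal.Quotient.mkₐ A Ir
  have h12 : g1 = g2 := by
    refine Algebra.FormallyUnramified.ext' p ⟨r, hkp⟩ g1 g2 fun x => ?_
    have e1 : p (v (j (Ideal.Quotient.mk 𝔣 x))) = u (j (Ideal.Quotient.mk 𝔣 x)) :=
      congr($hv2 _)
    have e2 : u (j (Ideal.Quotient.mk 𝔣 x)) = m (Ideal.Quotient.mk 𝔣 x) := congr($huj _)
    exact e1.trans e2
  intro x hx
  have h3 : g1 x = g2 x := by rw [h12]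
  have h4 : g1 x = 0 := by
    change v (j (Ideal.Quotient.mk 𝔣 x)) = 0
    rw [Ideal.Quotient.eq_zero_iff_mem.2 hx, map_zero, map_zero]
  rw [h4] at h3
  exact Ideal.Quotient.eq_zero_iff_mem.1 h3.symm

lemma hens_iso {A B R0 R H : Type u} [CommRing A] [CommRing B] [CommRing R0] [CommRing R]
    [CommRing H]
    [Algebra A B] [Algebra A R0] [Algebra A R] (I : Ideal A)
    (ρ0 : R0 →+* B) (hρ : ρ0.comp (algebraMap A R0) = algebraMap A B)
    (hH : IsHenselization (I.map (algebraMap A R0)) ρ0)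
    (𝔣 : Ideal R) (q : R0 →+* R ⧸ 𝔣)
    (hq : q.comp (algebraMap A R0) = (Ideal.Quotient.mk 𝔣).comp (algebraMap A R))
    (hepi : ∀ (C : Type u) [CommRing C] (g g' : R ⧸ 𝔣 →+* C), g.comp q = g'.comp q → g = g')
    (j : R ⧸ 𝔣 →+* B) (hj : j.comp q = ρ0)
    (ρ : R →+* H) (hR : IsHenselization (I.map (algebraMap A R)) ρ) :
    ∃ e : (H ⧸ 𝔣.map ρ) ≃+* B,
          (e : (H ⧸ 𝔣.map ρ) →+* B).comp
            ((Ideal.Quotient.mk (𝔣.map ρ)).comp (ρ.comp (algebraMap A R))) = algebraMap A B := by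
  let J := 𝔣.map ρ
  let π : H →+* H ⧸ J := Ideal.Quotient.mk J
  have hQ : HenselianRing (H ⧸ J) (I.map ((π.comp ρ).comp (algebraMap A R))) := by
    have := hens_quot hR.1 π Ideal.Quotient.mk_surjective
    rwa [Ideal.map_map, Ideal.map_map] at this
  have hB : HenselianRing B (I.map (algebraMap A B)) := by
    have := hH.1
    rwa [Ideal.map_map, hρ] at this
  let α : R ⧸ 𝔣 →+* H ⧸ J := Ideal.quotientMap J ρ Ideal.le_comap_map
  have hα : α.comp (Ideal.Quotient.mk 𝔣) = π.comp ρ := rfl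
  have hαA : (α.comp q).comp (algebraMap A R0) = (π.comp ρ).comp (algebraMap A R) := by
    rw [RingHom.comp_assoc, hq]; rfl
  have hjA : (j.comp (Ideal.Quotient.mk 𝔣)).comp (algebraMap A R) = algebraMap A B := by
    rw [RingHom.comp_assoc, ← hq, ← RingHom.comp_assoc, hj, hρ]
  obtain ⟨β, hβ, -⟩ := hH.2 _ _ hQ (α.comp q) (by rw [Ideal.map_map, hαA])
  obtain ⟨γ', hγ', -⟩ := hR.2 _ _ hB (j.comp (Ideal.Quotient.mk 𝔣)) (by rw [Ideal.map_map, hjA])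
  have hγJ : ∀ x ∈ J, γ' x = 0 := by
    have : J ≤ RingHom.ker γ' := by
      rw [Ideal.map_le_iff_le_comap]
      intro x hx
      have h1 : γ' (ρ x) = j (Ideal.Quotient.mk 𝔣 x) := congr($hγ' x)
      change γ' (ρ x) = 0
      rw [h1, Ideal.Quotient.eq_zero_iff_mem.2 hx, map_zero]
    exact this
  let γ : H ⧸ J →+* B := Ideal.Quotient.lift J γ' hγJ
  have hγ : (γ.comp π).comp ρ = j.comp (Ideal.Quotient.mk 𝔣) := hγ'
  have hγα : γ.comp α = j := by
    apply Ideal.Quotient.ringHom_ext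
    exact hγ
  have hβj : β.comp j = α := hepi _ _ _ (by rw [RingHom.comp_assoc, hj]; exact hβ)
  have h1 : γ.comp β = RingHom.id B := by
    refine (hH.2 _ _ hB ρ0 (by rw [Ideal.map_map, hρ])).unique ?_ (RingHom.id_comp _)
    change (γ.comp β).comp ρ0 = ρ0
    rw [RingHom.comp_assoc, show β.comp ρ0 = α.comp q from hβ, ← RingHom.comp_assoc, hγα, hj]
  have h2 : β.comp γ = RingHom.id _ := by
    apply Ideal.Quotient.ringHom_ext
    refine (hR.2 _ _ hQ (π.comp ρ) (by rw [Ideal.map_map])).unique ?_ rfl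
    change (β.comp ((γ.comp π).comp ρ)) = π.comp ρ
    rw [hγ, ← RingHom.comp_assoc, hβj, hα]
  refine ⟨RingEquiv.ofRingHom γ β h1 h2, ?_⟩
  rw [← hjA, ← hγ]
  rfl

end final

end HensAux

/-- Structure of h-formally étale hfp algebras: such a `B` is the quotient of the
Henselization `H` of an étale `A`-algebra `R` by a finitely generated ideal `J` contained in
`⋂_{r ≥ 1} I^r·H`. -/
theorem exists_etale_henselization_quotient_of_isHFormallyEtale
    {A B : Type u} [CommRing A] [CommRing B] [Algebra A B]
    (I : Ideal A) [HenselianRing A I]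
    (hhfp : IsHfp (algebraMap A B) I)
    (hfe : IsHFormallyEtale (algebraMap A B) I) :
    ∃ (R : Type u) (_ : CommRing R) (_ : Algebra A R) (H : Type u) (_ : CommRing H)
      (ρ : R →+* H),
      Algebra.Etale A R ∧
      IsHenselization (I.map (algebraMap A R)) ρ ∧
      ∃ J : Ideal H, J.FG ∧
        (∀ r : ℕ, 1 ≤ r → J ≤ (I ^ r).map (ρ.comp (algebraMap A R))) ∧
        ∃ e : (H ⧸ J) ≃+* B,
          (e : (H ⧸ J) →+* B).comp
            ((Ideal.Quotient.mk J).comp (ρ.comp (algebraMap A R))) = algebraMap A B := by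
  obtain ⟨R0, _, ψ, ρ0, hfp, hρ, hH⟩ := hhfp
  letI := ψ.toAlgebra
  have hfp' : Algebra.FinitePresentation A R0 := hfp
  have hρ' : ρ0.comp (algebraMap A R0) = algebraMap A B := hρ
  have hH' : IsHenselization (I.map (algebraMap A R0)) ρ0 := hH
  let S := R0 ⧸ I.map (algebraMap A R0)
  letI : Algebra (A ⧸ I) S := (Ideal.quotientMap (I.map (algebraMap A R0)) (algebraMap A R0)
    Ideal.le_comap_map).toAlgebra
  haveI : IsScalarTower A (A ⧸ I) S := IsScalarTower.of_algebraMap_eq fun _ => rfl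
  have hk : Function.Surjective (algebraMap A (A ⧸ I)) := Ideal.Quotient.mk_surjective
  have hkk : RingHom.ker (algebraMap A (A ⧸ I)) = I := Ideal.mk_ker
  have hS : Function.Surjective (algebraMap R0 S) := Ideal.Quotient.mk_surjective
  have hkS : RingHom.ker (algebraMap R0 S) = I.map (algebraMap A R0) := Ideal.mk_ker
  haveI : Algebra.FormallyEtale (A ⧸ I) S :=
    HensAux.formallyEtale_quot I hk hkk hS hkS ρ0 hρ' hH' hfe
  obtain ⟨R, _, _, 𝔣, q, s, het, hfg, h𝔣, hq, hs, hlift, hepi⟩ :=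
    HensAux.stepB (R0 := R0) I hk hkk hS hkS
  obtain ⟨j, hj⟩ := hlift B ρ0 (by
    have h1 := Ideal.mem_map_of_mem ρ0 hs
    have h2 := HensAux.isUnit_add hH'.1.jac isUnit_one h1
    rw [map_sub, map_one, add_sub_cancel] at h2
    exact h2)
  obtain ⟨H, _, ρ, hR⟩ := HensAux.exists_henselization R (I.map (algebraMap A R))
  refine ⟨R, inferInstance, inferInstance, H, inferInstance, ρ, het, hR, 𝔣.map ρ, hfg.map ρ, ?_,
    HensAux.hens_iso I ρ0 hρ' hH' 𝔣 q hq hepi j hj ρ hR⟩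
  intro r hr
  rw [← Ideal.map_map]
  exact Ideal.map_mono (HensAux.f_le I ρ0 hρ' hH' hfe 𝔣 h𝔣 q hq hepi j hj r hr)
end
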